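/- Let t > 0. For every bounded continuous function f : ℝ^d → ℝ, the sums ∑_{v∈ℤ^d} x_{⌊t/ε⌋}(v) f(εv) converge, as ε → 0⁺, to (Γ(d/2+1)/(π^{d/2} (det Q)^{1/2} t^d)) ∫_{{y : ⟨y, Q⁻¹y⟩ ≤ t²}} f(y) dy. (Weak convergence of the Jacobi polynomial iteration to the fundamental solution of the Euler–Poisson–Darboux equation.) -/

import Mathlib

open MeasureTheory Matrix Filter Topology Real

noncomputable section

def latticeConv {d : ℕ} (ω x : (Fin d → ℤ) → ℝ) : (Fin d → ℤ) → ℝ :=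
  fun v => ∑' η : Fin d → ℤ, ω (v - η) * x η

def covQ (d : ℕ) (ω : (Fin d → ℤ) → ℝ) : Matrix (Fin d) (Fin d) ℝ :=
  Matrix.of fun i j => ∑' v : Fin d → ℤ, ω v * (v i : ℝ) * (v j : ℝ)

def ftOmega {d : ℕ} (ω : (Fin d → ℤ) → ℝ) (ξ : Fin d → ℝ) : ℂ :=
  ∑' v : Fin d → ℤ, (ω v : ℂ) * Complex.exp (Complex.I * ((∑ i, ξ i * (v i : ℝ) : ℝ) : ℂ))

def aCoef0 (d : ℕ) : ℝ := ((d : ℝ) + 4) / (2 * (2 + (d : ℝ)))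
def bCoef0 (d : ℕ) : ℝ := (d : ℝ) / (2 * (2 + (d : ℝ)))
def aCoef (d n : ℕ) : ℝ :=
  (2 * (n : ℝ) + (d : ℝ)/2 + 1) * (2 * (n : ℝ) + (d : ℝ)/2 + 2) / (2 * ((n : ℝ) + 1 + (d : ℝ)/2)^2)
def bCoef (d n : ℕ) : ℝ :=
  (d : ℝ)^2 * (2 * (n : ℝ) + (d : ℝ)/2 + 1) / (8 * ((n : ℝ) + 1 + (d : ℝ)/2)^2 * (2 * (n : ℝ) + (d : ℝ)/2))
def cCoef (d n : ℕ) : ℝ :=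
  (n : ℝ)^2 * (2 * (n : ℝ) + (d : ℝ)/2 + 2) / (((n : ℝ) + 1 + (d : ℝ)/2)^2 * (2 * (n : ℝ) + (d : ℝ)/2))

def besselJ (ν z : ℝ) : ℝ :=
  ∑' m : ℕ, ((-1 : ℝ)^m / ((m.factorial : ℝ) * Real.Gamma ((m : ℝ) + ν + 1))) * (z / 2) ^ (2 * (m : ℝ) + ν)

def jacobiP (α β : ℝ) (n : ℕ) (x : ℝ) : ℝ :=
  ∑ s ∈ Finset.range (n + 1),
    (Real.Gamma ((n : ℝ) + α + 1) / (Real.Gamma (α + (s : ℝ) + 1) * ((n - s).factorial : ℝ))) *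
    (Real.Gamma ((n : ℝ) + β + 1) / (Real.Gamma ((n : ℝ) + β - (s : ℝ) + 1) * (s.factorial : ℝ))) *
    ((x - 1) / 2) ^ s * ((x + 1) / 2) ^ (n - s)

def jacobiPi (α β : ℝ) (n : ℕ) (x : ℝ) : ℝ := jacobiP α β n x / jacobiP α β n 1

def pd {d : ℕ} (j : Fin d) (g : (Fin d → ℝ) → ℝ) : (Fin d → ℝ) → ℝ :=
  fun y => deriv (fun s => g (Function.update y j s)) (y j)


/-- coefficients of the hypergeometric polynomial -/
def jA (α ν : ℝ) (k : ℕ) : ℝ :=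
  ∏ j ∈ Finset.range k, (-((ν - j) * (ν + α + 1 + j)) / ((j + 1) * (α + 1 + j)))

lemma jA_zero (α ν : ℝ) : jA α ν 0 = 1 := by simp [jA]

lemma jA_succ (α ν : ℝ) (k : ℕ) :
    jA α ν (k+1) = jA α ν k * (-((ν - k) * (ν + α + 1 + k)) / ((k + 1) * (α + 1 + k))) := by
  unfold jA
  rw [Finset.prod_range_succ]

lemma jA_eq_zero (α : ℝ) (n k : ℕ) (h : n < k) : jA α n k = 0 := by
  unfold jA
  apply Finset.prod_eq_zero (Finset.mem_range.2 h)
  simp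

lemma jA_up (α ν : ℝ) (hα : 0 < α) (m : ℕ) (hν : 0 ≤ ν) :
    (ν + α + 1) * jA α (ν + 1) (m+1) =
      jA α ν m * (-((ν+1) * (ν+α+m+1) * (ν + α + m+2)) / ((m+1) * (α+1+m))) := by
  induction m with
  | zero => 
    simp only [jA_succ, jA_zero]
    have : α + 1 ≠ 0 := by positivity
    push_cast
    field_simp
    ring
  | succ m ih =>
    rw [jA_succ, ← mul_assoc, ih, jA_succ α ν m]
    have h1 : α + 1 + m ≠ 0 := by positivity
    have h2 : α + 1 + (m+1) ≠ 0 := by positivity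
    push_cast
    field_simp
    ring

lemma jA_down (α ν : ℝ) (hα : 0 < α) (m : ℕ) :
    ν * jA α (ν - 1) (m+1) =
      jA α ν m * (-((ν-m) * (ν-m-1) * (ν + α)) / ((m+1) * (α+1+m))) := by
  induction m with
  | zero => 
    simp only [jA_succ, jA_zero]
    have : α + 1 ≠ 0 := by positivity
    push_cast
    field_simp
    ring
  | succ m ih =>
    rw [jA_succ, ← mul_assoc, ih, jA_succ α ν m]
    have h1 : α + 1 + m ≠ 0 := by positivity
    have h2 : α + 1 + (m+1) ≠ 0 := by positivity
    push_cast
    field_simp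
    ring

/-- normalized Jacobi polynomial in the variable s = (1-x)/2 -/
def jP (α : ℝ) (n : ℕ) : Polynomial ℝ :=
  ∑ k ∈ Finset.range (n+1), Polynomial.monomial k (jA α n k)

lemma jP_coeff (α : ℝ) (n k : ℕ) : (jP α n).coeff k = jA α n k := by
  unfold jP
  rw [Polynomial.finsetSum_coeff]
  simp only [Polynomial.coeff_monomial]
  rw [Finset.sum_ite_eq' (Finset.range (n+1)) k]
  split_ifs with h
  · rfl
  · rw [jA_eq_zero]; simpa using h

open Polynomial in
lemma jP_rec (d n : ℕ) (hd : 1 ≤ d) :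
    jP ((d:ℝ)/2) (n+2) = C (aCoef d (n+1)) * (jP ((d:ℝ)/2) (n+1) - C 2 * (X * jP ((d:ℝ)/2) (n+1)))
      + C (bCoef d (n+1)) * jP ((d:ℝ)/2) (n+1) - C (cCoef d (n+1)) * jP ((d:ℝ)/2) n := by
  have hα : (0:ℝ) < (d:ℝ)/2 := by positivity
  unfold aCoef bCoef cCoef
  have hd2 : (d:ℝ) = 2 * ((d:ℝ)/2) := by ring
  generalize hα' : (d:ℝ)/2 = α at *
  rw [hd2]
  ext k
  rcases k with _ | m
  · simp only [Polynomial.coeff_add, Polynomial.coeff_sub, Polynomial.coeff_C_mul,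
      Polynomial.coeff_X_mul_zero, jP_coeff, jA_zero]
    push_cast
    field_simp
    ring
  · simp only [Polynomial.coeff_add, Polynomial.coeff_sub, Polynomial.coeff_C_mul,
      Polynomial.coeff_X_mul, jP_coeff]
    have h1 := jA_up α ((n+1:ℕ):ℝ) hα m (by positivity)
    have h2 := jA_down α ((n+1:ℕ):ℝ) hα m
    rw [jA_succ α ((n+1:ℕ):ℝ) m]
    push_cast at h1 h2 ⊢
    rw [show (n:ℝ)+1-1 = n by ring] at h2
    rw [show (n:ℝ)+1+1 = n+2 by ring] at h1
    have e1 : jA α (n+2) (m+1) = jA α (n+1) m * (-((n+2) * (n+1+α+m+1) * (n+1 + α + m+2)) / ((m+1) * (α+1+m))) / (n+1+α+1) := by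
      rw [← h1]; field_simp
    have e2 : jA α n (m+1) = jA α (n+1) m * (-((n+1-m) * (n+1-m-1) * (n+1 + α)) / ((m+1) * (α+1+m))) / (n+1) := by
      rw [← h2]; field_simp
    rw [e1, e2]
    have h3 : (2 * ((n:ℝ)+1) + α) ≠ 0 := by positivity
    have h4 : ((n:ℝ)+1 + 1 + α) ≠ 0 := by positivity
    have h5 : α+1+m ≠ 0 := by positivity
    have h6 : ((n:ℝ)+1 + α+1) ≠ 0 := by positivity
    field_simp
    ring

open Polynomial in
lemma jP_one (d : ℕ) (hd : 1 ≤ d) :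
    jP ((d:ℝ)/2) 1 = C (aCoef0 d) * (jP ((d:ℝ)/2) 0 - C 2 * (X * jP ((d:ℝ)/2) 0))
      + C (bCoef0 d) * jP ((d:ℝ)/2) 0  := by
  unfold aCoef0 bCoef0
  simp only [jP, Finset.sum_range_succ, Finset.sum_range_zero, jA_succ, jA_zero]
  ext k
  rcases k with _ | _ | m
  · simp [Polynomial.coeff_X, Polynomial.coeff_one]
    have : (2:ℝ)+d ≠ 0 := by positivity
    field_simp; ring
  · simp [Polynomial.coeff_X, Polynomial.coeff_one, Polynomial.coeff_monomial]
    have : (2:ℝ)+d ≠ 0 := by positivity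
    field_simp; ring
  · simp [Polynomial.coeff_X, Polynomial.coeff_one, Polynomial.coeff_monomial]

open Polynomial in
lemma jP_ode (α : ℝ) (hα : 0 < α) (n : ℕ) :
    X * derivative (derivative (jP α n)) - X * (X * derivative (derivative (jP α n)))
      + C (α+1) * derivative (jP α n) - C (α+2) * (X * derivative (jP α n))
      + C ((n:ℝ) * (n + α + 1)) * jP α n = 0 := by
  ext k
  rcases k with _ | _ | m
  · simp only [coeff_add, coeff_sub, coeff_C_mul, coeff_X_mul_zero, coeff_derivative, jP_coeff,
      jA_succ, jA_zero, coeff_zero]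
    push_cast
    field_simp
    ring
  · simp only [coeff_add, coeff_sub, coeff_C_mul, coeff_X_mul, coeff_X_mul_zero, coeff_derivative, jP_coeff,
      jA_succ, jA_zero, coeff_zero]
    push_cast
    field_simp
    ring
  · simp only [coeff_add, coeff_sub, coeff_C_mul, coeff_X_mul, coeff_derivative, jP_coeff,
      jA_succ α _ (m+2), coeff_zero]
    push_cast
    have h5 : α+1+(m+2) ≠ 0 := by positivity
    field_simp
    ring


lemma jP_ode_eval (α : ℝ) (hα : 0 < α) (n : ℕ) (s : ℝ) :
    s * (jP α n).derivative.derivative.eval s - s * (s * (jP α n).derivative.derivative.eval s)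
      + (α+1) * (jP α n).derivative.eval s - (α+2) * (s * (jP α n).derivative.eval s)
      + ((n:ℝ) * (n + α + 1)) * (jP α n).eval s = 0 := by
  have h := congrArg (Polynomial.eval s) (jP_ode α hα n)
  simpa using h

lemma jP_eval_zero (α : ℝ) (n : ℕ) : (jP α n).eval 0 = 1 := by
  rw [← Polynomial.coeff_zero_eq_eval_zero, jP_coeff, jA_zero]

lemma jP_sonin (α : ℝ) (hα : 0 < α) (n : ℕ) (hn : 1 ≤ n) (s : ℝ) (hs : s ∈ Set.Icc (0:ℝ) (1/2)) :
    (jP α n).eval s ^ 2 + s * (1 - s) * (jP α n).derivative.eval s ^ 2 / ((n:ℝ) * (n + α + 1)) ≤ 1 := by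
  set F : ℝ → ℝ := fun s => (jP α n).eval s ^ 2 +
    s * (1 - s) * (jP α n).derivative.eval s ^ 2 / ((n:ℝ) * (n + α + 1)) with hF
  have hn' : (0:ℝ) < n := by exact_mod_cast hn
  have hl : (0:ℝ) < (n:ℝ) * (n + α + 1) := by positivity
  have hder : ∀ s, HasDerivAt F
      ((jP α n).derivative.eval s ^ 2 * (-(2*α+1) + (2*α+2)*s) / ((n:ℝ) * (n + α + 1))) s := by
    intro s
    have h0 := (jP α n).hasDerivAt s
    have h1 := (jP α n).derivative.hasDerivAt s
    have hs := hasDerivAt_id' s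
    have h := (h0.pow 2).add (((hs.mul (hs.const_sub 1)).mul (h1.pow 2)).div_const ((n:ℝ) * (n + α + 1)))
    refine h.congr_deriv ?_
    have ho := jP_ode_eval α hα n s
    simp only [Pi.mul_apply, Pi.pow_apply]
    field_simp
    push_cast
    simp
    linear_combination (2 * (Polynomial.derivative (jP α n)).eval s) * ho
  have hanti : AntitoneOn F (Set.Icc 0 (1/2)) := by
    apply antitoneOn_of_deriv_nonpos (convex_Icc _ _)
    · exact fun x _ => (hder x).continuousAt.continuousWithinAt
    · exact fun x _ => (hder x).differentiableAt.differentiableWithinAt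
    · intro x hx
      rw [interior_Icc] at hx
      rw [(hder x).deriv]
      apply div_nonpos_of_nonpos_of_nonneg _ hl.le
      apply mul_nonpos_of_nonneg_of_nonpos (sq_nonneg _)
      nlinarith [hx.1, hx.2]
  have := hanti (by constructor <;> norm_num) hs hs.1
  simpa [hF, jP_eval_zero] using this

lemma jE_deriv (d : ℕ) (hd : 1 ≤ d) (n : ℕ) (φ : ℝ) (S C : ℝ) (hS : S = sin φ) (hC : C = cos φ)
    (hSp : 0 < S) (hCp : 0 < C) (N : ℝ) (hN : N = n + ((d:ℝ)/2+1)/2)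
    (D W : ℝ → ℝ) (hD : D = fun φ => N^2 * sin φ^2 * cos φ^2 - (((d:ℝ)/2)^2 - 1/4) * cos φ^2/4 + sin φ^2/16)
    (hDp : 0 < D φ)
    (hW : W = fun φ => sin φ^2 * cos φ ^2 * (jP ((d:ℝ)/2) n).derivative.eval (sin φ^2) +
      (((d:ℝ)/2) + 1/2 - (((d:ℝ)/2)+1) * sin φ^2)/2 * (jP ((d:ℝ)/2) n).eval (sin φ^2)) :
    HasDerivAt (fun φ => sin φ ^ (d+1) * cos φ * ((jP ((d:ℝ)/2) n).eval (sin φ^2)^2 + W φ^2 / D φ))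
      (- (2 * S ^ (d+1) * C * W φ ^ 2 * ((((d:ℝ)/2)^2-1/4) * C^4 / 4 + S^4/16)/(S * C) / D φ^2)) φ := by
  have hα : (0:ℝ) < (d:ℝ)/2 := by positivity
  have hs := Real.hasDerivAt_sin φ
  have hc := Real.hasDerivAt_cos φ
  have hss := hs.pow 2
  have hcc := hc.pow 2
  have h0 := ((jP ((d:ℝ)/2) n).hasDerivAt (sin φ^2)).comp φ hss
  have h1 := ((jP ((d:ℝ)/2) n).derivative.hasDerivAt (sin φ^2)).comp φ hss
  have hDd : HasDerivAt D (2 * S * C * (N^2*(C^2 - S^2) + (((d:ℝ)/2)^2 - 1/4)/4 + 1/16)) φ := by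
    rw [hD]
    refine ((((hss.const_mul (N^2)).mul hcc).sub ((hcc.const_mul _).div_const 4)).add (hss.div_const 16)).congr_deriv ?_
    rw [← hS, ← hC]
    push_cast
    simp [← hS, ← hC]
    ring
  have hWd := (((hss.mul hcc).mul h1).add ((((hss.const_mul ((d:ℝ)/2+1)).const_sub ((d:ℝ)/2+1/2)).div_const 2).mul h0))
  have hWd' : HasDerivAt W _ φ := hWd.congr_of_eventuallyEq (by rw [hW]; exact Eventually.of_forall fun x => by simp)
  have ho := jP_ode_eval ((d:ℝ)/2) hα n (sin φ^2)
  have hWφ : W φ = S^2 * C^2 * (jP ((d:ℝ)/2) n).derivative.eval (sin φ^2) +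
      (((d:ℝ)/2) + 1/2 - (((d:ℝ)/2)+1) * S^2)/2 * (jP ((d:ℝ)/2) n).eval (sin φ^2) := by
    rw [hW, hS, hC]
  have hDφ : D φ = N^2 * S^2 * C^2 - (((d:ℝ)/2)^2 - 1/4) * C^2/4 + S^2/16 := by
    rw [hD, hS, hC]
  have h1S : S^2 = 1 - C^2 := by rw [hS, hC]; linarith [Real.sin_sq_add_cos_sq φ]
  have h1S' : sin φ^2 = 1 - C^2 := by rw [hC]; linarith [Real.sin_sq_add_cos_sq φ]
  have hY : HasDerivAt (fun φ => (jP ((d:ℝ)/2) n).eval (sin φ^2)) 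
      ((2 * W φ - ((((d:ℝ)/2) + 1/2)*C^2 - S^2/2) * (jP ((d:ℝ)/2) n).eval (sin φ^2))/(S*C)) φ := by
    refine (h0.congr_of_eventuallyEq (Eventually.of_forall fun x => by simp)).congr_deriv ?_
    rw [hWφ, ← hS, ← hC]
    field_simp
    push_cast
    have hC2 : C^2 = 1 - S^2 := by linarith
    ring_nf
    simp only [hC2]
    ring
  have hW2 : HasDerivAt W ((W φ * ((C^2-S^2) - ((d:ℝ)/2+1/2)*C^2+S^2/2)
      - 2 * D φ * (jP ((d:ℝ)/2) n).eval (sin φ^2))/(S*C)) φ := by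
    refine hWd'.congr_deriv ?_
    simp only [Function.comp_apply, Pi.mul_apply, Pi.pow_apply]
    rw [hWφ, hDφ, eq_div_iff (by positivity), hN]
    rw [← hS, ← hC] at *
    generalize (jP ((d:ℝ)/2) n).eval (S^2) = y0 at *
    generalize (jP ((d:ℝ)/2) n).derivative.eval (S^2) = y1 at *
    generalize (jP ((d:ℝ)/2) n).derivative.derivative.eval (S^2) = y2 at *
    push_cast
    have hC2 : C^2 = 1 - S^2 := by linarith
    have hC4 : C^4 = (1 - S^2)^2 := by rw [← hC2]; ring
    rw [← sub_eq_zero]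
    have key := congrArg (fun z => 2 * S^2*C^2 * z) ho
    simp only [mul_zero] at key
    rw [← key]
    ring_nf
    simp only [hC2, hC4]
    ring
  have hE := ((hs.pow (d+1)).mul hc).mul ((hY.pow 2).add ((hW2.pow 2).div hDd hDp.ne'))
  refine (hE.congr_of_eventuallyEq (Eventually.of_forall fun x => by simp)).congr_deriv ?_
  simp only [Pi.mul_apply, Pi.pow_apply, Pi.add_apply, Pi.div_apply]
  rw [← hS, ← hC]
  rw [← hS] at hWφ ho
  generalize (jP ((d:ℝ)/2) n).eval (S^2) = y0 at *
  have hDφ' := hDφ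
  generalize D φ = D0 at *
  generalize W φ = W0 at *
  push_cast
  simp only [pow_succ S d, pow_one]
  generalize S ^ d = Sd
  have hC2 : C^2 = 1 - S^2 := by linarith
  have hC4 : C^4 = (1 - S^2)^2 := by rw [← hC2]; ring
  have hC6 : C^6 = (1 - S^2)^3 := by rw [← hC2]; ring
  have hα2 : (d:ℝ) = 2 * ((d:ℝ)/2) := by ring
  generalize (d:ℝ)/2 = α at *
  rw [hα2]
  field_simp
  have key : 512 * D0 * (C^2-S^2) - 2 * C ^ 2 * S ^ 2 * (((C ^ 2 - S ^ 2) * N ^ 2 * 4 ^ 2 + (α ^ 2 * 4 - 1)) * 16 + 4 ^ 2)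
      + 2 * (C ^ 4 * (α ^ 2 * 4 - 1) * 16 + S ^ 4 * 4 ^ 2) = 0 := by
    rw [hDφ, hC4, hC2]
    ring
  linear_combination Sd * W0^2 * key

set_option maxHeartbeats 2000000 in
/-- decay estimate -/
lemma jP_decay (d : ℕ) (hd : 1 ≤ d) : ∃ K C : ℝ, 0 < K ∧ 0 < C ∧ ∃ n0 : ℕ, ∀ n : ℕ, n0 ≤ n → ∀ S : ℝ,
    0 ≤ S → S < 1 → 
    (n * S ≤ K → (jP ((d:ℝ)/2) n).eval (S^2) ^ 2 ≤ 1) ∧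
    (K ≤ n * S → (n * S) ^ (d+1) * Real.sqrt (1 - S^2) * (jP ((d:ℝ)/2) n).eval (S^2) ^ 2 ≤ C) := by
  have hα : (0:ℝ) < (d:ℝ)/2 := by positivity
  have hα1 : (1/2:ℝ) ≤ (d:ℝ)/2 := by
    have : (1:ℝ) ≤ d := by exact_mod_cast hd
    linarith
  obtain ⟨α, hαd⟩ : ∃ α, α = (d:ℝ)/2 := ⟨_, rfl⟩
  rw [← hαd] at hα hα1 ⊢
  set K := α + 1 with hK
  have hKp : 0 < K := by positivity
  obtain ⟨n0, hn0⟩ := exists_nat_ge (2 * K^2 + 1)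
  refine ⟨K, K^(d+1) * (1 + 4 * (2 * K^2 * (α+2) + K^2)), hKp, by positivity, n0, ?_⟩
  intro n hn S hS0 hS1
  have hnR : 2 * K^2 + 1 ≤ n := hn0.trans (by exact_mod_cast hn)
  have hn1 : (1:ℝ) ≤ n := by nlinarith [sq_nonneg K]
  have hnp : (0:ℝ) < n := by linarith
  have hn1' : 1 ≤ n := by exact_mod_cast hn1
  have hnsq : 2 * K^2 ≤ (n:ℝ)^2 := by nlinarith [sq_nonneg K]
  have hsmall : ∀ S : ℝ, 0 ≤ S → n * S ≤ K → S^2 ∈ Set.Icc (0:ℝ) (1/2) := by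
    intro S hS0 h
    refine ⟨sq_nonneg _, ?_⟩
    have h2 : (n * S)^2 ≤ K^2 := by gcongr
    have : (n:ℝ)^2 * S^2 ≤ n^2 * (1/2) := by nlinarith
    exact le_of_mul_le_mul_left this (by positivity)
  have hson : ∀ S : ℝ, 0 ≤ S → n * S ≤ K → (jP α n).eval (S^2) ^ 2 ≤ 1 ∧
     S^2 * (1 - S^2) * (jP α n).derivative.eval (S^2) ^ 2 ≤ (n:ℝ) * (n + α + 1) := by
    intro S hS0 h
    have h1 := jP_sonin α hα n hn1' (S^2) (hsmall S hS0 h)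
    have hl : (0:ℝ) < (n:ℝ) * (n + α + 1) := by positivity
    have h3 := (hsmall S hS0 h).2
    have h2 : 0 ≤ S^2 * (1 - S^2) * (jP α n).derivative.eval (S^2) ^ 2 := by
      have : 0 ≤ 1 - S^2 := by linarith
      positivity
    have h4 : 0 ≤ S^2 * (1 - S^2) * (jP α n).derivative.eval (S^2) ^ 2 / ((n:ℝ) * (n + α + 1)) := by positivity
    refine ⟨by linarith, ?_⟩
    have h5 : S^2 * (1 - S^2) * (jP α n).derivative.eval (S^2) ^ 2 / ((n:ℝ) * (n + α + 1)) ≤ 1 := by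
      linarith [sq_nonneg ((jP α n).eval (S^2))]
    rwa [div_le_one hl] at h5
  refine ⟨fun h => (hson S hS0 h).1, fun h => ?_⟩
  set S0 := K / n with hS0d
  have hS0p : 0 < S0 := by positivity
  have hnS0 : n * S0 = K := by rw [hS0d]; field_simp
  have hS0S : S0 ≤ S := by rw [hS0d, div_le_iff₀ hnp]; linarith
  set φ0 := arcsin S0
  set φ1 := arcsin S
  have hsin0 : sin φ0 = S0 := sin_arcsin (by linarith) (by linarith)
  have hsin1 : sin φ1 = S := sin_arcsin (by linarith) (by linarith)
  have hφ : φ0 ≤ φ1 := Real.monotone_arcsin hS0S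
  have hφ0 : 0 < φ0 := Real.arcsin_pos.2 hS0p
  have hφ1 : φ1 < π/2 := Real.arcsin_lt_pi_div_two.2 hS1
  obtain ⟨N, hN⟩ : ∃ N : ℝ, N = n + (α+1)/2 := ⟨_, rfl⟩
  obtain ⟨D, hD⟩ : ∃ D : ℝ → ℝ, D = fun φ => N^2 * sin φ^2 * cos φ^2 - (α^2 - 1/4) * cos φ^2/4 + sin φ^2/16 := ⟨_, rfl⟩
  obtain ⟨W, hW⟩ : ∃ W : ℝ → ℝ, W = fun φ => sin φ^2 * cos φ ^2 * (jP α n).derivative.eval (sin φ^2) +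
      (α + 1/2 - (α+1) * sin φ^2)/2 * (jP α n).eval (sin φ^2) := ⟨_, rfl⟩
  have hDlow : ∀ φ ∈ Set.Icc φ0 φ1, 0 < sin φ ∧ 0 < cos φ ∧ cos φ^2 * (K^2 / 2) ≤ D φ := by
    intro φ hφ'
    have hs : S0 ≤ sin φ := by
      rw [← hsin0]
      exact Real.sin_le_sin_of_le_of_le_pi_div_two (by linarith [Real.pi_pos]) (by linarith [hφ'.2]) hφ'.1
    have hc : 0 < cos φ := Real.cos_pos_of_mem_Ioo ⟨by linarith [hφ'.1, Real.pi_pos], by linarith [hφ'.2]⟩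
    refine ⟨by linarith, hc, ?_⟩
    have h1 : K ≤ N * sin φ := by
      calc K = n * S0 := hnS0.symm
        _ ≤ N * sin φ := by
          have : (n:ℝ) ≤ N := by rw [hN]; linarith
          gcongr
          linarith
    have h2 : K^2 ≤ (N * sin φ)^2 := by gcongr
    have h3 : D φ = cos φ^2 * ((N * sin φ)^2 - (α^2-1/4)/4) + sin φ^2/16 := by rw [hD]; ring
    rw [h3]
    have h4 : K^2/2 ≤ (N * sin φ)^2 - (α^2-1/4)/4 := by
      have : K^2 = α^2 + 2 * α + 1 := by rw [hK]; ring
      linarith [sq_nonneg α]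
    linarith [mul_le_mul_of_nonneg_left h4 (sq_nonneg (cos φ)), sq_nonneg (sin φ)]
  have hDp : ∀ φ ∈ Set.Icc φ0 φ1, 0 < D φ := fun φ h => by
    obtain ⟨_, h2, h3⟩ := hDlow φ h
    exact lt_of_lt_of_le (by positivity) h3
  set E : ℝ → ℝ := (fun φ => sin φ ^ (d+1) * cos φ * ((jP α n).eval (sin φ^2)^2 + W φ^2 / D φ)) with hE
  have hder : ∀ φ ∈ Set.Icc φ0 φ1, HasDerivAt E (- (2 * sin φ ^ (d+1) * cos φ * W φ ^ 2 * ((α^2-1/4) * cos φ^4 / 4 + sin φ^4/16)/(sin φ * cos φ) / D φ^2)) φ := fun φ h =>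
    by
      have := jE_deriv d hd n φ (sin φ) (cos φ) rfl rfl (hDlow φ h).1 (hDlow φ h).2.1 N (by rw [hN, hαd]) D W
       (by rw [hD, hαd]) (hDp φ h) (by rw [hW, hαd])
      rw [← hαd] at this
      exact this
  have hanti : AntitoneOn E (Set.Icc φ0 φ1) := by
    apply antitoneOn_of_deriv_nonpos (convex_Icc _ _)
    · exact fun x hx => (hder x hx).continuousAt.continuousWithinAt
    · exact fun x hx => (hder x (interior_subset hx)).differentiableAt.differentiableWithinAt
    · intro x hx
      have hx := interior_subset hx
      rw [(hder x hx).deriv]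
      obtain ⟨h1, h2, -⟩ := hDlow x hx
      have h3 := hDp x hx
      have h4 : 0 ≤ α^2 - 1/4 := by nlinarith
      rw [neg_nonpos]
      positivity
  have hfin := hanti (Set.left_mem_Icc.2 hφ) (Set.right_mem_Icc.2 hφ) hφ
  have hcos1 : cos φ1 = Real.sqrt (1 - S^2) := Real.cos_arcsin S
  have hE1 : S^(d+1) * Real.sqrt (1 - S^2) * (jP α n).eval (S^2) ^ 2 ≤ E φ1 := by
    rw [hE]
    simp only [hsin1, hcos1]
    gcongr
    have := hDp φ1 (Set.right_mem_Icc.2 hφ)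
    have : 0 ≤ W φ1^2 / D φ1 := by positivity
    linarith
  have hE0 : E φ0 ≤ S0^(d+1) * (1 + 4 * (2 * K^2 * (α+2) + K^2)) := by
    rw [hE]
    simp only [hsin0]
    obtain ⟨h1, h2, h3⟩ := hDlow φ0 (Set.left_mem_Icc.2 hφ)
    have hm := hDp φ0 (Set.left_mem_Icc.2 hφ)
    obtain ⟨g1, g2⟩ := hson S0 hS0p.le hnS0.le
    have g3 := (hsmall S0 hS0p.le hnS0.le).2
    have hc2 : cos φ0^2 = 1 - S0^2 := by rw [← hsin0]; linarith [Real.sin_sq_add_cos_sq φ0]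
    have hDge : 1/4 ≤ D φ0 := by
      rw [hc2] at h3
      have hK1 : 1 ≤ K^2 := one_le_pow₀ (by linarith)
      have : (1/2:ℝ)*(1/2) ≤ (1-S0^2)*(K^2/2) :=
        mul_le_mul (by linarith) (by linarith) (by norm_num) (by linarith)
      linarith
    have hW2 : W φ0^2 ≤ 2 * K^2 * (α+2) + K^2 := by
      have hWe : W φ0 = S0^2 * (1 - S0^2) * (jP α n).derivative.eval (S0^2) +
        (α + 1/2 - (α+1) * S0^2)/2 * (jP α n).eval (S0^2) := by rw [hW]; simp only [hsin0, hc2]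
      rw [hWe]
      generalize (jP α n).derivative.eval (S0^2) = y1 at *
      generalize (jP α n).eval (S0^2) = y0 at *
      have a1 : (S0^2 * (1 - S0^2) * y1)^2 ≤ K^2 * (α+2) := by
        have : (S0^2 * (1 - S0^2) * y1)^2 = (S0^2 * (1 - S0^2)) * (S0^2 * (1 - S0^2) * y1^2) := by ring
        rw [this]
        calc (S0^2 * (1 - S0^2)) * (S0^2 * (1 - S0^2) * y1^2) ≤ S0^2 * (n * (n+α+1)) := by
              have q1 : S0^2 * (1 - S0^2) ≤ S0^2 := by nlinarith [sq_nonneg S0]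
              apply mul_le_mul q1 g2 _ (sq_nonneg _)
              have : 0 ≤ 1 - S0^2 := by linarith
              positivity
          _ ≤ S0^2 * (n * (n * (α+2))) := by
              gcongr
              have := mul_le_mul_of_nonneg_right hn1 (by linarith : 0 ≤ α + 1)
              linarith
          _ = K^2 * (α+2) := by rw [← hnS0]; ring
      have a2 : ((α + 1/2 - (α+1) * S0^2)/2 * y0)^2 ≤ K^2/2 := by
        rw [mul_pow]
        have b1 : ((α + 1/2 - (α+1) * S0^2)/2)^2 ≤ (K/2)^2 := by
          have e1 := mul_le_mul_of_nonneg_left g3 hKp.le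
          have e2 : 0 ≤ K * S0^2 := by positivity
          apply sq_le_sq'
          · rw [← hK]; linarith
          · rw [← hK]; linarith
        calc _ ≤ (K/2)^2 * 1 := by gcongr
          _ ≤ K^2/2 := by
            have := sq_nonneg K
            have e : (K/2)^2 * 1 = K^2/4 := by ring
            rw [e]; linarith
      refine (add_sq_le (a := S0^2 * (1 - S0^2) * y1)).trans ?_
      linarith
    have hWD : W φ0^2 / D φ0 ≤ 4 * (2 * K^2 * (α+2) + K^2) := by
      rw [div_le_iff₀ hm]
      have h0 : 0 ≤ 2 * K^2 * (α+2) + K^2 := by positivity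
      have := mul_le_mul_of_nonneg_left hDge h0
      linarith
    have hc1 : cos φ0 ≤ 1 := Real.cos_le_one _
    calc S0^(d+1) * cos φ0 * ((jP α n).eval (S0^2)^2 + W φ0^2 / D φ0)
        ≤ S0^(d+1) * 1 * (1 + 4 * (2 * K^2 * (α+2) + K^2)) := by gcongr
      _ = _ := by ring
  calc (n * S) ^ (d+1) * Real.sqrt (1 - S^2) * (jP α n).eval (S^2) ^ 2
      = (n:ℝ)^(d+1) * (S^(d+1) * Real.sqrt (1 - S^2) * (jP α n).eval (S^2) ^ 2) := by rw [mul_pow]; ring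
    _ ≤ (n:ℝ)^(d+1) * (S0^(d+1) * (1 + 4 * (2 * K^2 * (α+2) + K^2))) := by
        exact mul_le_mul_of_nonneg_left (hE1.trans (hfin.trans hE0)) (by positivity)
    _ = K^(d+1) * (1 + 4 * (2 * K^2 * (α+2) + K^2)) := by
        have hKn : K^(d+1) = (n:ℝ)^(d+1)*S0^(d+1) := by rw [← mul_pow, hnS0]
        rw [hKn]; ring


/-- real symbol -/
def jphi {d : ℕ} (ω : (Fin d → ℤ) → ℝ) (ξ : Fin d → ℝ) : ℝ :=
  ∑' v : Fin d → ℤ, ω v * cos (∑ i, ξ i * (v i : ℝ))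

def jchi {d : ℕ} (ξ : Fin d → ℝ) (v : Fin d → ℤ) : ℂ :=
  Complex.exp (Complex.I * ((∑ i, ξ i * (v i : ℝ) : ℝ) : ℂ))

lemma jchi_add {d : ℕ} (ξ : Fin d → ℝ) (v w : Fin d → ℤ) : jchi ξ (v + w) = jchi ξ v * jchi ξ w := by
  unfold jchi
  rw [← Complex.exp_add, ← mul_add, ← Complex.ofReal_add, ← Finset.sum_add_distrib]
  congr 3
  refine congrArg _ (funext fun i => ?_)
  simp; ring

lemma jchi_re {d : ℕ} (ξ : Fin d → ℝ) (v : Fin d → ℤ) : (jchi ξ v).re = cos (∑ i, ξ i * (v i : ℝ)) := by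
  unfold jchi; rw [mul_comm, Complex.exp_ofReal_mul_I_re]

lemma jchi_im {d : ℕ} (ξ : Fin d → ℝ) (v : Fin d → ℤ) : (jchi ξ v).im = sin (∑ i, ξ i * (v i : ℝ)) := by
  unfold jchi; rw [mul_comm, Complex.exp_ofReal_mul_I_im]

lemma ft_eq_phi {d : ℕ} (ω : (Fin d → ℤ) → ℝ) (hfin : (Function.support ω).Finite)
    (hsymm : ∀ v, ω (-v) = ω v) (ξ : Fin d → ℝ) : ftOmega ω ξ = (jphi ω ξ : ℂ) := by
  have hsum : Summable (fun v => (ω v : ℂ) * jchi ξ v) := by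
    apply summable_of_hasFiniteSupport
    refine hfin.subset fun v hv => ?_
    contrapose! hv
    simp only [Function.mem_support, not_not] at hv ⊢
    simp [hv]
  have h1 : ftOmega ω ξ = ∑' v, (ω v : ℂ) * jchi ξ v := rfl
  rw [h1]
  apply Complex.ext
  · rw [Complex.re_tsum hsum, Complex.ofReal_re, jphi]
    refine tsum_congr fun v => ?_
    rw [Complex.re_ofReal_mul, jchi_re]
  · rw [Complex.im_tsum hsum, Complex.ofReal_im]
    simp only [Complex.im_ofReal_mul, jchi_im]
    have h2 := (Equiv.neg (Fin d → ℤ)).tsum_eq (fun v => ω v * sin (∑ i, ξ i * (v i : ℝ)))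
    simp only [Equiv.neg_apply, hsymm] at h2
    have h3 : ∀ v : Fin d → ℤ, ω v * sin (∑ i, ξ i * ((-v) i : ℝ)) = -(ω v * sin (∑ i, ξ i * (v i : ℝ))) := by
      intro v
      rw [← mul_neg, ← Real.sin_neg, ← Finset.sum_neg_distrib]
      simp
    simp only [Pi.neg_apply, Int.cast_neg] at h2 h3
    simp only [h3, tsum_neg] at h2
    linarith

lemma conv_eq {d : ℕ} (ω : (Fin d → ℤ) → ℝ) (hfin : (Function.support ω).Finite)
    (x : (Fin d → ℤ) → ℝ) (v : Fin d → ℤ) :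
    latticeConv ω x v = ∑ u ∈ hfin.toFinset, ω u * x (v - u) := by
  unfold latticeConv
  rw [← (Equiv.subLeft v).tsum_eq]
  simp only [Equiv.subLeft_apply, sub_sub_cancel]
  rw [tsum_eq_sum]
  intro u hu
  simp at hu
  simp [hu]

lemma conv_ft {d : ℕ} (ω : (Fin d → ℤ) → ℝ) (hfin : (Function.support ω).Finite)
    (x : (Fin d → ℤ) → ℝ) (hx : (Function.support x).Finite) (ξ : Fin d → ℝ) :
    ∑' v, (latticeConv ω x v : ℂ) * jchi ξ v = ftOmega ω ξ * ∑' v, (x v : ℂ) * jchi ξ v := by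
  have hsum : Summable (fun v => (x v : ℂ) * jchi ξ v) := by
    apply summable_of_hasFiniteSupport
    refine hx.subset fun v hv => ?_
    contrapose! hv
    simp only [Function.mem_support, not_not] at hv ⊢
    simp [hv]
  simp only [conv_eq ω hfin]
  have h1 : ftOmega ω ξ = ∑ u ∈ hfin.toFinset, (ω u : ℂ) * jchi ξ u := by
    unfold ftOmega
    rw [tsum_eq_sum (s := hfin.toFinset)]
    · rfl
    · intro u hu
      simp at hu
      simp [hu]
  have h2 : ∀ v, ((∑ u ∈ hfin.toFinset, ω u * x (v - u) : ℝ) : ℂ) * jchi ξ v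
      = ∑ u ∈ hfin.toFinset, ((ω u : ℂ) * jchi ξ u) * ((x (v - u) : ℂ) * jchi ξ (v - u)) := by
    intro v
    push_cast
    rw [Finset.sum_mul]
    refine Finset.sum_congr rfl fun u _ => ?_
    have : jchi ξ v = jchi ξ u * jchi ξ (v - u) := by rw [← jchi_add]; congr 1; abel
    rw [this]; ring
  simp only [h2]
  have hs : ∀ u, Summable fun v => (x (v - u) : ℂ) * jchi ξ (v - u) := fun u =>
    ((Equiv.subRight u).summable_iff (f := fun v => (x v : ℂ) * jchi ξ v)).2 hsum
  rw [Summable.tsum_finsetSum (fun u _ => (hs u).mul_left _), h1, Finset.sum_mul]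
  refine Finset.sum_congr rfl fun u _ => ?_
  rw [tsum_mul_left]
  congr 1
  exact (Equiv.subRight u).tsum_eq (fun v => (x v : ℂ) * jchi ξ v)

/-- iteration data -/
def IsIter (d : ℕ) (ω : (Fin d → ℤ) → ℝ) (x : ℕ → (Fin d → ℤ) → ℝ) : Prop :=
  (∀ v, x 0 v = if v = 0 then 1 else 0) ∧
  (∀ v, x 1 v = aCoef0 d * latticeConv ω (x 0) v + bCoef0 d * x 0 v) ∧
  (∀ n, 1 ≤ n → ∀ v,
      x (n + 1) v = aCoef d n * latticeConv ω (x n) v + bCoef d n * x n v - cCoef d n * x (n - 1) v)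

lemma iter_supp {d : ℕ} (ω : (Fin d → ℤ) → ℝ) (hfin : (Function.support ω).Finite)
    (R : ℕ) (hR : ∀ v, ω v ≠ 0 → ∀ i, |v i| ≤ R)
    (x : ℕ → (Fin d → ℤ) → ℝ) (hx : IsIter d ω x) (n : ℕ) :
    ∀ v, x n v ≠ 0 → ∀ i, |v i| ≤ n * R := by
  have hconv : ∀ (m : ℕ) (y : (Fin d → ℤ) → ℝ), (∀ v, y v ≠ 0 → ∀ i, |v i| ≤ m * R) →
      ∀ v, latticeConv ω y v ≠ 0 → ∀ i, |v i| ≤ ((m+1:ℕ):ℤ) * R := by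
    intro m y hy v hv i
    rw [conv_eq ω hfin] at hv
    obtain ⟨u, hu, h⟩ := Finset.exists_ne_zero_of_sum_ne_zero hv
    have h1 := hR u (left_ne_zero_of_mul h) i
    have h2 := hy (v - u) (right_ne_zero_of_mul h) i
    have : v i = (v - u) i + u i := by simp
    rw [this]
    refine (abs_add_le _ _).trans ?_
    push_cast
    linarith
  induction n using Nat.strong_induction_on with
  | _ n ih =>
    obtain ⟨h0, h1, hr⟩ := hx
    rcases n with _ | _ | n
    · intro v hv i
      rw [h0] at hv
      have : v = 0 := by by_contra h; simp [h] at hv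
      simp [this]
    · intro v hv i
      rw [h1] at hv
      by_cases hc : latticeConv ω (x 0) v = 0
      · have hv' : x 0 v ≠ 0 := by intro h; simp [h, hc] at hv
        have := ih 0 (by omega) v hv' i
        refine this.trans ?_
        push_cast; gcongr; norm_num
      · exact hconv 0 (x 0) (ih 0 (by omega)) v hc i
    · intro v hv i
      rw [hr (n+1) (by omega)] at hv
      by_cases hc : latticeConv ω (x (n+1)) v = 0
      · by_cases hv1 : x (n+1) v = 0
        · have hv' : x n v ≠ 0 := by intro h; simp [h, hc, hv1] at hv
          have := ih n (by omega) v hv' i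
          refine this.trans ?_
          push_cast; gcongr; linarith
        · have := ih (n+1) (by omega) v hv1 i
          refine this.trans ?_
          push_cast; gcongr; linarith
      · exact hconv (n+1) (x (n+1)) (ih (n+1) (by omega)) v hc i

def jbox (d : ℕ) (m : ℕ) : Finset (Fin d → ℤ) := Fintype.piFinset fun _ => Finset.Icc (-(m:ℤ)) m

lemma jbox_card (d m : ℕ) : (jbox d m).card = (2 * m + 1)^d := by
  unfold jbox
  rw [Fintype.card_piFinset]
  simp only [Int.card_Icc, Finset.prod_const, Finset.card_univ, Fintype.card_fin]
  congr 1; omega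

lemma mem_jbox (d m : ℕ) (v : Fin d → ℤ) : v ∈ jbox d m ↔ ∀ i, |v i| ≤ m := by
  unfold jbox; simp [abs_le]

lemma iter_box {d : ℕ} (ω : (Fin d → ℤ) → ℝ) (hfin : (Function.support ω).Finite)
    (R : ℕ) (hR : ∀ v, ω v ≠ 0 → ∀ i, |v i| ≤ R)
    (x : ℕ → (Fin d → ℤ) → ℝ) (hx : IsIter d ω x) (n : ℕ) (v : Fin d → ℤ) (hv : v ∉ jbox d (n * R)) : x n v = 0 := by
  by_contra h
  exact hv ((mem_jbox _ _ _).2 (by simpa using iter_supp ω hfin R hR x hx n v h))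

lemma iter_ft {d : ℕ} (hd : 1 ≤ d) (ω : (Fin d → ℤ) → ℝ) (hfin : (Function.support ω).Finite)
    (hsymm : ∀ v, ω (-v) = ω v)
    (R : ℕ) (hR : ∀ v, ω v ≠ 0 → ∀ i, |v i| ≤ R)
    (x : ℕ → (Fin d → ℤ) → ℝ) (hx : IsIter d ω x) (ξ : Fin d → ℝ) (n : ℕ) :
    ∑' v, (x n v : ℂ) * jchi ξ v = (((jP ((d:ℝ)/2) n).eval ((1 - jphi ω ξ)/2) : ℝ) : ℂ) := by
  have hfs : ∀ n, (Function.support (x n)).Finite := fun n =>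
    (jbox d (n*R)).finite_toSet.subset fun v hv => by
      by_contra h
      exact hv (iter_box ω hfin R hR x hx n v h)
  have hs : ∀ n, Summable (fun v => (x n v : ℂ) * jchi ξ v) := fun n => by
    apply summable_of_hasFiniteSupport
    refine (hfs n).subset fun v hv => ?_
    contrapose! hv
    simp only [Function.mem_support, not_not] at hv ⊢
    simp [hv]
  have hsc : ∀ n, Summable (fun v => (latticeConv ω (x n) v : ℂ) * jchi ξ v) := fun n => by
    simp only [conv_eq ω hfin]
    apply summable_of_hasFiniteSupport
    refine (hfin.add (hfs n)).subset fun v hv => ?_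
    have hv := left_ne_zero_of_mul hv
    have hv : (∑ u ∈ hfin.toFinset, ω u * x n (v - u)) ≠ 0 := by exact_mod_cast hv
    obtain ⟨u, hu, h⟩ := Finset.exists_ne_zero_of_sum_ne_zero hv
    exact ⟨u, left_ne_zero_of_mul h, v - u, right_ne_zero_of_mul h, by simp⟩
  have hc := fun n => conv_ft ω hfin (x n) (hfs n) ξ
  simp only [ft_eq_phi ω hfin hsymm ξ] at hc
  obtain ⟨h0, h1, hr⟩ := hx
  have hz : ∑' v, (x 0 v : ℂ) * jchi ξ v = (((jP ((d:ℝ)/2) 0).eval ((1 - jphi ω ξ)/2) : ℝ) : ℂ) := by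
    rw [tsum_eq_single 0]
    · simp [h0, jchi, jP, jA_zero]
    · intro v hv; simp [h0, hv]
  induction n using Nat.strong_induction_on with
  | _ n ih =>
    rcases n with _ | _ | n
    · exact hz
    · have e : ∀ v, (x (0+1) v : ℂ) * jchi ξ v = (aCoef0 d : ℂ) * ((latticeConv ω (x 0) v : ℂ) * jchi ξ v)
        + (bCoef0 d : ℂ) * ((x 0 v : ℂ) * jchi ξ v) := by
        intro v; rw [h1]; push_cast; ring
      simp only [e]
      rw [Summable.tsum_add ((hsc 0).mul_left _) ((hs 0).mul_left _), tsum_mul_left, tsum_mul_left, hc, hz]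
      rw [show 0 + 1 = 1 from rfl, jP_one d hd]
      simp only [Polynomial.eval_add, Polynomial.eval_sub, Polynomial.eval_mul, Polynomial.eval_C, Polynomial.eval_X]
      push_cast
      ring
    · have e : ∀ v, (x (n+2) v : ℂ) * jchi ξ v = (aCoef d (n+1) : ℂ) * ((latticeConv ω (x (n+1)) v : ℂ) * jchi ξ v)
        + (bCoef d (n+1) : ℂ) * ((x (n+1) v : ℂ) * jchi ξ v) - (cCoef d (n+1) : ℂ) * ((x n v : ℂ) * jchi ξ v):= by
        intro v; rw [hr (n+1) (by omega)]; rw [Nat.add_sub_cancel]; push_cast; ring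
      show ∑' v, (x (n+2) v : ℂ) * jchi ξ v = _
      simp only [e]
      rw [Summable.tsum_sub (((hsc _).mul_left _).add ((hs _).mul_left _)) ((hs _).mul_left _),
        Summable.tsum_add ((hsc _).mul_left _) ((hs _).mul_left _), tsum_mul_left, tsum_mul_left, tsum_mul_left, hc,
        ih (n+1) (by omega), ih n (by omega)]
      rw [show n+1+1 = n+2 from rfl, jP_rec d n hd]
      simp only [Polynomial.eval_add, Polynomial.eval_sub, Polynomial.eval_mul, Polynomial.eval_C, Polynomial.eval_X]
      push_cast
      ring

def jcube (d : ℕ) : Set (Fin d → ℝ) := Set.pi Set.univ (fun _ => Set.Icc (-π) π)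

lemma int_one (m : ℤ) : ∫ t in Set.Icc (-π) π, Complex.exp (Complex.I * ((t * m : ℝ) : ℂ)) =
    if m = 0 then ((2 * π : ℝ) : ℂ) else 0 := by
  rw [integral_Icc_eq_integral_Ioc, ← intervalIntegral.integral_of_le (by linarith [Real.pi_pos])]
  split_ifs with h
  · subst h
    simp
    push_cast; ring
  · have hc : (Complex.I * m) ≠ 0 := mul_ne_zero Complex.I_ne_zero (by exact_mod_cast h)
    have := integral_exp_mul_complex (a := -π) (b := π) hc
    have e : ∀ t : ℝ, Complex.exp (Complex.I * ((t * m : ℝ) : ℂ)) = Complex.exp (Complex.I * m * t) := by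
      intro t; congr 1; push_cast; ring
    simp only [e]
    rw [this]
    have h2 : Complex.exp (Complex.I * m * (π:ℝ)) = Complex.exp (Complex.I * m * ((-π : ℝ) : ℂ)) := by
      rw [Complex.exp_eq_exp_iff_exists_int]
      exact ⟨m, by push_cast; ring⟩
    rw [h2]; simp

lemma int_jchi {d : ℕ} (m : Fin d → ℤ) : ∫ ξ in jcube d, jchi ξ m = if m = 0 then (((2 * π)^d : ℝ) : ℂ) else 0 := by
  have h1 : ∀ ξ : Fin d → ℝ, jchi ξ m = ∏ i, Complex.exp (Complex.I * ((ξ i * m i : ℝ) : ℂ)) := by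
    intro ξ
    rw [← Complex.exp_sum, jchi]
    congr 1
    push_cast
    rw [Finset.mul_sum]
  simp only [h1]
  rw [jcube, volume_pi, Measure.restrict_pi_pi]
  rw [integral_fintype_prod_eq_prod (fun i t => Complex.exp (Complex.I * ((t * m i : ℝ) : ℂ)))]
  simp only [int_one]
  split_ifs with h
  · subst h; simp
  · have : ∃ i, m i ≠ 0 := by
      by_contra hh; push_neg at hh; exact h (funext hh)
    obtain ⟨i, hi⟩ := this
    apply Finset.prod_eq_zero (Finset.mem_univ i)
    simp [hi]

lemma jchi_cont {d : ℕ} (v : Fin d → ℤ) : Continuous (fun ξ : Fin d → ℝ => jchi ξ v) := by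
  unfold jchi; fun_prop

lemma jchi_conj {d : ℕ} (ξ : Fin d → ℝ) (v : Fin d → ℤ) : (starRingEnd ℂ) (jchi ξ v) = jchi ξ (-v) := by
  unfold jchi
  rw [← Complex.exp_conj]
  congr 1
  simp [Complex.conj_ofReal]

lemma jcube_compact (d : ℕ) : IsCompact (jcube d) := isCompact_univ_pi fun _ => isCompact_Icc

lemma parseval {d : ℕ} (s : Finset (Fin d → ℤ)) (x : (Fin d → ℤ) → ℝ) (F : (Fin d → ℝ) → ℝ)
    (hF : ∀ ξ, ∑ v ∈ s, (x v : ℂ) * jchi ξ v = (F ξ : ℂ)) :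
    ∫ ξ in jcube d, F ξ ^ 2 = (2*π)^d * ∑ v ∈ s, x v ^ 2 := by
  have h1 : ∀ ξ, ((F ξ ^ 2 : ℝ) : ℂ) = ∑ v ∈ s, ∑ w ∈ s, ((x v : ℂ) * (x w : ℂ)) * jchi ξ (v - w) := by
    intro ξ
    have hc : (F ξ : ℂ) = (starRingEnd ℂ) (∑ v ∈ s, (x v : ℂ) * jchi ξ v) := by
      rw [hF, Complex.conj_ofReal]
    push_cast
    rw [sq]
    nth_rw 2 [hc]
    rw [← hF, map_sum, Finset.sum_mul_sum]
    refine Finset.sum_congr rfl fun v _ => Finset.sum_congr rfl fun w _ => ?_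
    rw [map_mul, Complex.conj_ofReal, jchi_conj, sub_eq_add_neg, jchi_add]
    ring
  have hint : ∀ m : Fin d → ℤ, ∀ c : ℂ, Integrable (fun ξ => c * jchi ξ m) (volume.restrict (jcube d)) := fun m c =>
    ((continuous_const.mul (jchi_cont m)).continuousOn.integrableOn_compact (jcube_compact d))
  have h2 : ((∫ ξ in jcube d, F ξ ^ 2 : ℝ) : ℂ) = (((2*π)^d * ∑ v ∈ s, x v ^ 2 : ℝ) : ℂ) := by
    rw [← integral_complex_ofReal]
    have h1' : ∀ ξ, ((F ξ ^ 2 : ℝ) : ℂ) = ∑ v ∈ s, ∑ w ∈ s, ((x v : ℂ) * (x w : ℂ)) * jchi ξ (v - w) := h1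
    simp only [h1']
    rw [integral_finsetSum _ (fun v _ => integrable_finsetSum _ fun w _ => hint _ _)]
    have : ∀ v ∈ s, ∫ ξ in jcube d, ∑ w ∈ s, ((x v : ℂ) * (x w : ℂ)) * jchi ξ (v - w) = (x v : ℂ)^2 * (((2*π)^d : ℝ) : ℂ) := by
      intro v hv
      rw [integral_finsetSum _ (fun w _ => hint _ _)]
      simp only [integral_const_mul, int_jchi]
      rw [Finset.sum_eq_single_of_mem v hv]
      · simp [sq]
      · intro w _ hwv
        rw [if_neg (sub_ne_zero.2 hwv.symm)]; simp
    rw [Finset.sum_congr rfl this, ← Finset.sum_mul]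
    push_cast
    ring
  exact_mod_cast h2

def jg {d : ℕ} (ω : (Fin d → ℤ) → ℝ) (hfin : (Function.support ω).Finite) (ξ : Fin d → ℝ) : ℝ :=
  ∑ v ∈ hfin.toFinset, ω v * (∑ i, ξ i * (v i : ℝ))^2

lemma jphi_sum {d : ℕ} (ω : (Fin d → ℤ) → ℝ) (hfin : (Function.support ω).Finite) (ξ : Fin d → ℝ) :
    jphi ω ξ = ∑ v ∈ hfin.toFinset, ω v * cos (∑ i, ξ i * (v i : ℝ)) := by
  unfold jphi
  rw [tsum_eq_sum]
  intro u hu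
  simp at hu
  simp [hu]

lemma one_sub_jphi {d : ℕ} (ω : (Fin d → ℤ) → ℝ) (hfin : (Function.support ω).Finite)
    (hmass : ∑' v : Fin d → ℤ, ω v = 1) (ξ : Fin d → ℝ) :
    1 - jphi ω ξ = ∑ v ∈ hfin.toFinset, ω v * (1 - cos (∑ i, ξ i * (v i : ℝ))) := by
  have : ∑ v ∈ hfin.toFinset, ω v = 1 := by
    rw [← hmass, tsum_eq_sum]
    intro u hu
    simpa using hu
  rw [jphi_sum ω hfin]
  simp only [mul_sub, mul_one, Finset.sum_sub_distrib, this]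

lemma jg_eq {d : ℕ} (ω : (Fin d → ℤ) → ℝ) (hfin : (Function.support ω).Finite) (ξ : Fin d → ℝ) :
    jg ω hfin ξ = ξ ⬝ᵥ (covQ d ω *ᵥ ξ) := by
  have hQ : ∀ i j, covQ d ω i j = ∑ v ∈ hfin.toFinset, ω v * (v i : ℝ) * (v j : ℝ) := by
    intro i j
    simp only [covQ, Matrix.of_apply]
    rw [tsum_eq_sum]
    intro u hu
    simp at hu
    simp [hu]
  simp only [dotProduct, mulVec, hQ, jg]
  simp only [Finset.mul_sum, Finset.sum_mul, sq]
  rw [Finset.sum_comm]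
  refine Finset.sum_congr rfl fun i _ => ?_
  rw [Finset.sum_comm]
  refine Finset.sum_congr rfl fun j _ => ?_
  refine Finset.sum_congr rfl fun v _ => ?_
  ring

lemma jphi_cont {d : ℕ} (ω : (Fin d → ℤ) → ℝ) (hfin : (Function.support ω).Finite) :
    Continuous (jphi ω) := by
  have : jphi ω = fun ξ => ∑ v ∈ hfin.toFinset, ω v * cos (∑ i, ξ i * (v i : ℝ)) := funext (jphi_sum ω hfin)
  rw [this]; fun_prop

lemma jg_low {d : ℕ} (hd : 1 ≤ d) (ω : (Fin d → ℤ) → ℝ) (hfin : (Function.support ω).Finite) 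
    (hQ : (covQ d ω).PosDef) : ∃ c > 0, ∀ ξ, c * ‖ξ‖^2 ≤ jg ω hfin ξ := by
  have : Nonempty (Fin d) := ⟨⟨0, hd⟩⟩
  have hcont : Continuous (jg ω hfin) := by unfold jg; fun_prop
  have hne : (Metric.sphere (0 : Fin d → ℝ) 1).Nonempty := (NormedSpace.sphere_nonempty (E := Fin d → ℝ)).2 (by norm_num)
  obtain ⟨ξ0, hξ0, hmin⟩ := (isCompact_sphere (0 : Fin d → ℝ) 1).exists_isMinOn hne hcont.continuousOn
  have hpos : ∀ ξ, ξ ≠ 0 → 0 < jg ω hfin ξ := by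
    intro ξ hξ
    rw [jg_eq]
    have := hQ.dotProduct_mulVec_pos hξ
    simpa using this
  refine ⟨jg ω hfin ξ0, hpos _ (by intro h; simp [h] at hξ0), fun ξ => ?_⟩
  by_cases hξ : ξ = 0
  · subst hξ; simp [jg]
  · have hn : 0 < ‖ξ‖ := norm_pos_iff.2 hξ
    have h1 : jg ω hfin ξ0 ≤ jg ω hfin (‖ξ‖⁻¹ • ξ) := hmin (by simp [norm_smul, hn.ne'])
    have h2 : jg ω hfin (‖ξ‖⁻¹ • ξ) = (‖ξ‖⁻¹)^2 * jg ω hfin ξ := by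
      unfold jg
      rw [Finset.mul_sum]
      refine Finset.sum_congr rfl fun v _ => ?_
      have : ∑ i, (‖ξ‖⁻¹ • ξ) i * (v i : ℝ) = ‖ξ‖⁻¹ * ∑ i, ξ i * (v i : ℝ) := by
        rw [Finset.mul_sum]; refine Finset.sum_congr rfl fun i _ => ?_
        simp; ring
      rw [this]; ring
    rw [h2] at h1
    calc jg ω hfin ξ0 * ‖ξ‖^2 ≤ ((‖ξ‖⁻¹)^2 * jg ω hfin ξ) * ‖ξ‖^2 := by gcongr
      _ = jg ω hfin ξ := by field_simp

lemma phi_bounds {d : ℕ} (hd : 1 ≤ d) (ω : (Fin d → ℤ) → ℝ) (hfin : (Function.support ω).Finite)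
    (hnn : ∀ v, 0 ≤ ω v)
    (hmass : ∑' v : Fin d → ℤ, ω v = 1) (hsymm : ∀ v, ω (-v) = ω v)
    (R : ℕ) (hR : ∀ v, ω v ≠ 0 → ∀ i, |v i| ≤ R)
    (hQ : (covQ d ω).PosDef)
    (haper : ∀ ξ : Fin d → ℝ, (∀ i, ξ i ∈ Set.Icc (-π) π) → ξ ≠ 0 →
      ‖ftOmega ω ξ‖ < 1) :
    ∃ c > 0, ∃ δ > 0, ∀ ξ ∈ jcube d, c * ‖ξ‖^2 ≤ (1 - jphi ω ξ)/2 ∧ (1 - jphi ω ξ)/2 ≤ 1 - δ := by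
  have hab : ∀ ξ ∈ jcube d, ξ ≠ 0 → |jphi ω ξ| < 1 := by
    intro ξ hξ h0
    have := haper ξ (fun i => hξ i (Set.mem_univ i)) h0
    rw [ft_eq_phi ω hfin hsymm, Complex.norm_real] at this
    exact this
  have hz : jphi ω 0 = 1 := by simp [jphi, hmass]
  have hcont := jphi_cont ω hfin
  have hzero : (0 : Fin d → ℝ) ∈ jcube d := by
    intro i _; constructor <;> simp [Real.pi_pos.le]
  -- upper bound
  obtain ⟨ξm, hξm, hmin⟩ := (jcube_compact d).exists_isMinOn ⟨0, hzero⟩ hcont.continuousOn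
  have hm : -1 < jphi ω ξm := by
    by_cases h : ξm = 0
    · rw [h, hz]; norm_num
    · exact (abs_lt.1 (hab ξm hξm h)).1
  -- lower bound near 0
  obtain ⟨c0, hc0, hg⟩ := jg_low hd ω hfin hQ
  set r : ℝ := π / (d * R + 1) with hr
  have hrp : 0 < r := by positivity
  have hnear : ∀ ξ, ‖ξ‖ ≤ r → 2/π^2 * c0 * ‖ξ‖^2 ≤ 1 - jphi ω ξ := by
    intro ξ hξ
    have h1 : 2/π^2 * jg ω hfin ξ ≤ 1 - jphi ω ξ := by
      rw [one_sub_jphi ω hfin hmass, jg, Finset.mul_sum]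
      refine Finset.sum_le_sum fun v hv => ?_
      have hv' : ω v ≠ 0 := by simpa using hv
      have hle : |∑ i, ξ i * (v i : ℝ)| ≤ π := by
        calc |∑ i, ξ i * (v i : ℝ)| ≤ ∑ i, |ξ i * (v i : ℝ)| := Finset.abs_sum_le_sum_abs _ _
          _ ≤ ∑ i : Fin d, r * R := by
            refine Finset.sum_le_sum fun i _ => ?_
            rw [abs_mul]
            have a1 : |ξ i| ≤ r := (norm_le_pi_norm ξ i).trans hξ
            have a2 : |(v i : ℝ)| ≤ R := by exact_mod_cast hR v hv' i
            gcongr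
          _ = (d * R) * r := by simp; ring
          _ ≤ (d * R + 1) * r := by nlinarith
          _ = π := by rw [hr]; field_simp
      have := Real.cos_le_one_sub_mul_cos_sq hle
      have h3 := mul_le_mul_of_nonneg_left (by linarith : 2/π^2 * (∑ i, ξ i * (v i : ℝ))^2 ≤ 1 - cos (∑ i, ξ i * (v i : ℝ))) (hnn v)
      linarith
    have h2 := hg ξ
    calc 2/π^2 * c0 * ‖ξ‖^2 = 2/π^2 * (c0 * ‖ξ‖^2) := by ring
      _ ≤ 2/π^2 * jg ω hfin ξ := by gcongr
      _ ≤ _ := h1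
  have hfar : ∃ c1 > 0, ∀ ξ ∈ jcube d, r ≤ ‖ξ‖ → c1 ≤ 1 - jphi ω ξ := by
    set T := jcube d ∩ {ξ | r ≤ ‖ξ‖} with hT
    have hTc : IsCompact T := (jcube_compact d).inter_right (isClosed_le continuous_const continuous_norm)
    by_cases hne : T.Nonempty
    · obtain ⟨ξM, hξM, hmax⟩ := hTc.exists_isMaxOn hne hcont.continuousOn
      have hM : ξM ≠ 0 := by
        intro h
        have := hξM.2
        simp [h] at this
        linarith
      refine ⟨1 - jphi ω ξM, ?_, fun ξ h1 h2 => ?_⟩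
      · have := (abs_lt.1 (hab ξM hξM.1 hM)).2; linarith
      · have : jphi ω ξ ≤ jphi ω ξM := hmax ⟨h1, h2⟩
        linarith
    · exact ⟨1, one_pos, fun ξ h1 h2 => absurd ⟨ξ, h1, h2⟩ hne⟩
  obtain ⟨c1, hc1, hfar⟩ := hfar
  have hnormle : ∀ ξ ∈ jcube d, ‖ξ‖ ≤ π := by
    intro ξ hξ
    rw [pi_norm_le_iff_of_nonneg Real.pi_pos.le]
    intro i
    exact abs_le.2 (hξ i (Set.mem_univ i))
  refine ⟨min (2/π^2 * c0) (c1/π^2) / 2, by positivity, (1 + jphi ω ξm)/2, by linarith, fun ξ hξ => ⟨?_, ?_⟩⟩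
  · rcases le_total ‖ξ‖ r with h | h
    · have h1 := hnear ξ h
      have h2 : min (2/π^2 * c0) (c1/π^2) * ‖ξ‖^2 ≤ 2/π^2 * c0 * ‖ξ‖^2 := by gcongr; exact min_le_left _ _
      linarith
    · have h1 := hfar ξ hξ h
      have h2 : min (2/π^2 * c0) (c1/π^2) * ‖ξ‖^2 ≤ c1/π^2 * π^2 := by
        gcongr
        · exact min_le_right _ _
        · exact hnormle ξ hξ
      have h3 : c1/π^2 * π^2 = c1 := by field_simp
      linarith
  · have : jphi ω ξm ≤ jphi ω ξ := hmin hξ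
    linarith

lemma phi_limit {d : ℕ} (ω : (Fin d → ℤ) → ℝ) (hfin : (Function.support ω).Finite)
    (hmass : ∑' v : Fin d → ℤ, ω v = 1) (ξ : Fin d → ℝ) :
    Tendsto (fun ε : ℝ => (1 - jphi ω (ε • ξ)) / ε^2) (𝓝[>] 0) (𝓝 (jg ω hfin ξ / 2)) := by
  have h1 : ∀ ε : ℝ, (1 - jphi ω (ε • ξ)) / ε^2 = ∑ v ∈ hfin.toFinset,
      ω v * (2 * (ε⁻¹ * sin (ε * ((∑ i, ξ i * (v i : ℝ))/2)))^2) := by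
    intro ε
    rw [one_sub_jphi ω hfin hmass, Finset.sum_div]
    refine Finset.sum_congr rfl fun v _ => ?_
    have : ∑ i, (ε • ξ) i * (v i : ℝ) = 2 * (ε * ((∑ i, ξ i * (v i : ℝ))/2)) := by
      have : ∑ i, (ε • ξ) i * (v i : ℝ) = ε * ∑ i, ξ i * (v i : ℝ) := by
        rw [Finset.mul_sum]; refine Finset.sum_congr rfl fun i _ => ?_
        simp; ring
      rw [this]; ring
    rw [this, Real.cos_two_mul, Real.cos_sq']
    rw [mul_pow, inv_pow, div_eq_mul_inv]
    ring
  simp only [h1]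
  have h2 : jg ω hfin ξ / 2 = ∑ v ∈ hfin.toFinset, ω v * (2 * ((∑ i, ξ i * (v i : ℝ))/2)^2) := by
    rw [jg, Finset.sum_div]; refine Finset.sum_congr rfl fun v _ => ?_
    ring
  rw [h2]
  refine tendsto_finsetSum _ fun v _ => ?_
  refine Tendsto.const_mul _ (Tendsto.const_mul _ (Tendsto.pow ?_ 2))
  generalize (∑ i, ξ i * (v i : ℝ))/2 = u
  have hd : HasDerivAt (fun ε : ℝ => sin (ε * u)) u 0 := by
    have := (HasDerivAt.mul_const (hasDerivAt_id' (0:ℝ)) u).sin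
    simpa using this
  have := hd.tendsto_slope_zero
  simp only [zero_add, zero_mul, Real.sin_zero, sub_zero, smul_eq_mul] at this
  exact this.mono_left (nhdsWithin_mono _ (fun x hx => ne_of_gt hx))

lemma p_bound {d : ℕ} (hd : 1 ≤ d) (ω : (Fin d → ℤ) → ℝ) (hfin : (Function.support ω).Finite)
    (hnn : ∀ v, 0 ≤ ω v)
    (hmass : ∑' v : Fin d → ℤ, ω v = 1) (hsymm : ∀ v, ω (-v) = ω v)
    (R : ℕ) (hR : ∀ v, ω v ≠ 0 → ∀ i, |v i| ≤ R)
    (hQ : (covQ d ω).PosDef)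
    (haper : ∀ ξ : Fin d → ℝ, (∀ i, ξ i ∈ Set.Icc (-π) π) → ξ ≠ 0 →
      ‖ftOmega ω ξ‖ < 1) :
    ∃ C4 > 0, ∃ n0 : ℕ, ∀ n, n0 ≤ n → ∀ ξ ∈ jcube d,
      (1 + n * ‖ξ‖)^(d+1) * ((jP (d/2) n).eval ((1 - jphi ω ξ)/2))^2 ≤ C4 := by
  obtain ⟨c, hc, δ, hδ, hb⟩ := phi_bounds hd ω hfin hnn hmass hsymm R hR hQ haper
  obtain ⟨K, C, hK, hC, n0, hdec⟩ := jP_decay d hd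
  refine ⟨(1 + K/√c)^(d+1) + (1/K + 1/√c)^(d+1) * (C/√δ), by positivity, n0, fun n hn ξ hξ => ?_⟩
  obtain ⟨h1, h2⟩ := hb ξ hξ
  set s := (1 - jphi ω ξ)/2 with hs
  have hs0 : 0 ≤ s := le_trans (by positivity) h1
  have hS2 : (√s)^2 = s := Real.sq_sqrt hs0
  have hS1 : √s < 1 := by rw [Real.sqrt_lt' one_pos]; linarith
  have hcs : √c * ‖ξ‖ ≤ √s := by
    rw [← Real.sqrt_sq (norm_nonneg ξ), ← Real.sqrt_mul hc.le]; exact Real.sqrt_le_sqrt h1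
  have hsc : 0 < √c := Real.sqrt_pos.2 hc
  have hsd : 0 < √δ := Real.sqrt_pos.2 hδ
  have hxi : n * ‖ξ‖ ≤ n * √s / √c := by
    rw [le_div_iff₀ hsc, mul_assoc]; gcongr; linarith
  obtain ⟨ha, hb'⟩ := hdec n hn (√s) (Real.sqrt_nonneg _) hS1
  rw [hS2] at ha hb'
  set p := (jP (d/2) n).eval s with hp
  rcases le_total (n * √s) K with h | h
  · have h3 := ha h
    have h4 : (1 + n * ‖ξ‖)^(d+1) * p^2 ≤ (1 + K/√c)^(d+1) * 1 := by
      gcongr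
      exact hxi.trans (by gcongr)
    have : 0 ≤ (1/K + 1/√c)^(d+1) * (C/√δ) := by positivity
    linarith
  · have h3 := hb' h
    have h5 : √δ ≤ √(1 - s) := Real.sqrt_le_sqrt (by linarith)
    have h6 : (n * √s)^(d+1) * p^2 ≤ C / √δ := by
      rw [le_div_iff₀ hsd]
      calc (n * √s)^(d+1) * p^2 * √δ ≤ (n * √s)^(d+1) * p^2 * √(1-s) := by gcongr
        _ = (n * √s)^(d+1) * √(1-s) * p^2 := by ring
        _ ≤ C := h3
    have h7 : 1 + n * ‖ξ‖ ≤ (1/K + 1/√c) * (n * √s) := by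
      have : 1 ≤ 1/K * (n * √s) := by
        rw [one_div, inv_mul_eq_div, le_div_iff₀ hK]; linarith
      calc 1 + n * ‖ξ‖ ≤ 1/K * (n * √s) + n * √s / √c := by gcongr
        _ = _ := by ring
    have h4 : (1 + n * ‖ξ‖)^(d+1) * p^2 ≤ (1/K + 1/√c)^(d+1) * (C/√δ) := by
      calc (1 + n * ‖ξ‖)^(d+1) * p^2 ≤ ((1/K + 1/√c) * (n * √s))^(d+1) * p^2 := by gcongr
        _ = (1/K + 1/√c)^(d+1) * ((n * √s)^(d+1) * p^2) := by rw [mul_pow]; ring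
        _ ≤ _ := by gcongr
    have : 0 ≤ (1 + K/√c)^(d+1) := by positivity
    linarith

lemma tv_bound {d : ℕ} (hd : 1 ≤ d) (ω : (Fin d → ℤ) → ℝ) (hfin : (Function.support ω).Finite)
    (hnn : ∀ v, 0 ≤ ω v)
    (hmass : ∑' v : Fin d → ℤ, ω v = 1) (hsymm : ∀ v, ω (-v) = ω v)
    (R : ℕ) (hR : ∀ v, ω v ≠ 0 → ∀ i, |v i| ≤ R)
    (hQ : (covQ d ω).PosDef)
    (haper : ∀ ξ : Fin d → ℝ, (∀ i, ξ i ∈ Set.Icc (-π) π) → ξ ≠ 0 →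
      ‖ftOmega ω ξ‖ < 1) (x : ℕ → (Fin d → ℤ) → ℝ) (hx : IsIter d ω x) :
    ∃ M > 0, ∃ n1 : ℕ, ∀ n, n1 ≤ n → ∑ v ∈ jbox d (n*R), |x n v| ≤ M := by
  obtain ⟨C4, hC4, n0, hp⟩ := p_bound hd ω hfin hnn hmass hsymm R hR hQ haper
  have hint : Integrable (fun ξ : Fin d → ℝ => (1 + ‖ξ‖)^(-((d:ℝ)+1))) := by
    apply integrable_one_add_norm; simp
  set I := ∫ ξ : Fin d → ℝ, (1 + ‖ξ‖)^(-((d:ℝ)+1)) with hI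
  have hI0 : 0 ≤ I := integral_nonneg fun ξ => by positivity
  refine ⟨√((2*R+1)^d * (C4 * I)) + 1, by positivity, max n0 1, fun n hn => ?_⟩
  have hn0 : n0 ≤ n := (le_max_left _ _).trans hn
  have hn1 : 1 ≤ n := (le_max_right _ _).trans hn
  have hnpos : (0:ℝ) < n := by exact_mod_cast hn1
  have hpar := parseval (jbox d (n*R)) (x n) (fun ξ => (jP (d/2) n).eval ((1 - jphi ω ξ)/2)) (by
    intro ξ
    rw [← iter_ft hd ω hfin hsymm R hR x hx ξ n, tsum_eq_sum]
    intro v hv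
    rw [iter_box ω hfin R hR x hx n v hv]; simp)
  have hcontp : Continuous fun ξ => ((jP (d/2) n).eval ((1 - jphi ω ξ)/2))^2 := by
    have := jphi_cont ω hfin
    fun_prop
  have hint2 : Integrable (fun ξ : Fin d → ℝ => C4 * (1 + ‖(n:ℝ) • ξ‖)^(-((d:ℝ)+1))) := by
    exact (hint.comp_smul hnpos.ne').const_mul C4
  have hle : ∫ ξ in jcube d, ((jP (d/2) n).eval ((1 - jphi ω ξ)/2))^2 ≤ C4 * I / n^d := by
    calc ∫ ξ in jcube d, ((jP (d/2) n).eval ((1 - jphi ω ξ)/2))^2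
        ≤ ∫ ξ in jcube d, C4 * (1 + ‖(n:ℝ) • ξ‖)^(-((d:ℝ)+1)) := by
          refine setIntegral_mono_on (hcontp.continuousOn.integrableOn_compact (jcube_compact d)) hint2.integrableOn
            (jcube_compact d).measurableSet fun ξ hξ => ?_
          have := hp n hn0 ξ hξ
          have e : ((d:ℝ)+1) = ((d+1 : ℕ) : ℝ) := by push_cast; rfl
          rw [norm_smul, Real.norm_of_nonneg hnpos.le, Real.rpow_neg (by positivity), e, Real.rpow_natCast, ← div_eq_mul_inv,
            le_div_iff₀ (by positivity)]
          linarith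
      _ ≤ ∫ ξ, C4 * (1 + ‖(n:ℝ) • ξ‖)^(-((d:ℝ)+1)) := by
          refine setIntegral_le_integral hint2 (Filter.Eventually.of_forall fun ξ => ?_)
          show 0 ≤ _
          positivity
      _ = C4 * I / n^d := by
          rw [integral_const_mul, Measure.integral_comp_smul volume (fun ξ : Fin d → ℝ => (1 + ‖ξ‖)^(-((d:ℝ)+1)))]
          rw [← hI]
          have : Module.finrank ℝ (Fin d → ℝ) = d := by simp
          rw [this, abs_of_pos (by positivity), smul_eq_mul]
          field_simp
  have hsq : ∑ v ∈ jbox d (n*R), x n v^2 ≤ C4 * I / n^d := by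
    rw [hpar] at hle
    refine le_trans ?_ hle
    have h1 : (1:ℝ) ≤ (2*π)^d := one_le_pow₀ (by linarith [Real.pi_gt_three])
    have h2 : 0 ≤ ∑ v ∈ jbox d (n*R), x n v^2 := Finset.sum_nonneg fun v _ => sq_nonneg _
    nlinarith
  have hcs : (∑ v ∈ jbox d (n*R), |x n v|)^2 ≤ (jbox d (n*R)).card * ∑ v ∈ jbox d (n*R), |x n v|^2 :=
    sq_sum_le_card_mul_sum_sq
  simp only [sq_abs] at hcs
  have hcard : ((jbox d (n*R)).card : ℝ) ≤ ((2*R+1) * n)^d := by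
    rw [jbox_card]; push_cast
    gcongr
    have : (1:ℝ) ≤ n := by exact_mod_cast hn1
    nlinarith
  have hfinal : (∑ v ∈ jbox d (n*R), |x n v|)^2 ≤ (2*R+1)^d * (C4 * I) := by
    calc _ ≤ _ := hcs
      _ ≤ ((2*R+1) * n)^d * (C4 * I / n^d) := by gcongr
      _ = _ := by rw [mul_pow]; field_simp
  have := Real.le_sqrt_of_sq_le hfinal
  linarith

def jB (α z : ℝ) (k : ℕ) : ℝ := ∏ j ∈ Finset.range k, (-z / (((j:ℝ)+1) * (α+1+j)))

lemma jP_limit {ι : Type*} {l : Filter ι} (α : ℝ) (hα : 0 ≤ α) (n : ι → ℕ) (s : ι → ℝ) (z : ℝ)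
    (hn : Tendsto n l atTop) (hs : ∀ᶠ i in l, 0 ≤ s i)
    (hz : Tendsto (fun i => (n i : ℝ)^2 * s i) l (𝓝 z)) :
    Tendsto (fun i => (jP α (n i)).eval (s i)) l (𝓝 (∑' k, jB α z k)) := by
  have hev : ∀ m : ℕ, ∀ σ : ℝ, (jP α m).eval σ = ∑' k, jA α m k * σ^k := by
    intro m σ
    rw [tsum_eq_sum (s := Finset.range (m+1))]
    · rw [Polynomial.eval_eq_sum_range' (n := m+1)]
      · simp only [jP_coeff]
      · rw [Nat.lt_succ_iff, Polynomial.natDegree_le_iff_coeff_eq_zero]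
        intro N hN
        rw [jP_coeff, jA_eq_zero]
        exact hN
    · intro k hk
      rw [jA_eq_zero, zero_mul]
      simpa [Nat.lt_succ_iff] using hk
  simp only [hev]
  have hprod : ∀ (m : ℕ) (σ : ℝ) (k : ℕ), jA α m k * σ^k =
      ∏ j ∈ Finset.range k, (-((m-j)*(m+α+1+j) * σ)/((j+1)*(α+1+j))) := by
    intro m σ k
    rw [jA]
    rw [← Finset.card_range k, ← Finset.prod_const, Finset.card_range, ← Finset.prod_mul_distrib]
    refine Finset.prod_congr rfl fun j _ => ?_
    ring
  have hfac : ∀ k : ℕ, ∏ j ∈ Finset.range k, ((j:ℝ)+1) = k.factorial := by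
    intro k; rw [← Finset.prod_range_add_one_eq_factorial]; push_cast; rfl
  have hn1 : ∀ᶠ i in l, 1 ≤ n i := hn.eventually_ge_atTop 1
  have hzb : ∀ᶠ i in l, (n i : ℝ)^2 * s i ≤ z + 1 := by
    filter_upwards [hz.eventually_lt_const (lt_add_one z)] with i hi using hi.le
  refine tendsto_tsum_of_dominated_convergence (bound := fun k => (2*(|z|+1))^k / k.factorial) (Real.summable_pow_div_factorial _) ?_ ?_
  · intro k
    simp only [hprod]
    unfold jB
    refine tendsto_finsetProd _ fun j _ => ?_
    refine Tendsto.div_const (Tendsto.neg ?_) _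
    have hninv : Tendsto (fun i => ((n i:ℝ))⁻¹) l (𝓝 0) :=
      tendsto_inv_atTop_zero.comp (tendsto_natCast_atTop_atTop.comp hn)
    have h : Tendsto (fun i => (1 - j * ((n i:ℝ))⁻¹) * (1 + (α+1+j) * ((n i:ℝ))⁻¹) * ((n i : ℝ)^2 * s i)) l
        (𝓝 ((1 - j * 0) * (1 + (α+1+j) * 0) * z)) :=
      ((tendsto_const_nhds.sub (hninv.const_mul _)).mul (tendsto_const_nhds.add (hninv.const_mul _))).mul hz
    have e : (1 - j * 0) * (1 + (α+1+j) * 0) * z = z := by ring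
    rw [e] at h
    refine h.congr' ?_
    filter_upwards [hn1] with i hi
    have : (n i : ℝ) ≠ 0 := by positivity
    field_simp
    ring
  · filter_upwards [hn1, hs, hzb] with i hi hsi hzi k
    rcases lt_or_ge (n i) k with h | h
    · rw [jA_eq_zero _ _ _ h]; simp; positivity
    · rw [hprod, ← hfac, norm_prod]
      rw [← Finset.card_range k, ← Finset.prod_const, Finset.card_range, ← Finset.prod_div_distrib]
      refine Finset.prod_le_prod (fun _ _ => norm_nonneg _) fun j hj => ?_
      have hjn : (j:ℝ) ≤ n i := by
        have := Finset.mem_range.1 hj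
        exact_mod_cast this.le.trans h
      have hn1' : (1:ℝ) ≤ n i := by exact_mod_cast hi
      have hnj : (0:ℝ) ≤ n i - j := by linarith
      have hz' : z ≤ |z| := le_abs_self z
      rw [Real.norm_eq_abs, abs_div, abs_neg, abs_of_nonneg (by positivity), abs_of_nonneg (by positivity)]
      rw [div_le_div_iff₀ (by positivity) (by positivity)]
      have k1 : (n i : ℝ)+α+1+j ≤ 2 * n i * (α+1+j) := by nlinarith [Nat.cast_nonneg (α := ℝ) j]
      have k2 : (n i : ℝ) - j ≤ n i := by linarith [Nat.cast_nonneg (α := ℝ) j]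
      calc ((n i : ℝ) - j) * (n i + α + 1 + j) * s i * (j+1)
          ≤ n i * (2 * n i * (α+1+j)) * s i * (j+1) := by gcongr
        _ = 2 * ((n i : ℝ)^2 * s i) * ((j+1) * (α+1+j)) := by ring
        _ ≤ 2 * (|z|+1) * ((j+1) * (α+1+j)) := by gcongr; linarith

lemma floor_lim (t : ℝ) (ht : 0 < t) :
    Tendsto (fun ε : ℝ => ⌊t/ε⌋₊) (𝓝[>] 0) atTop ∧
    Tendsto (fun ε : ℝ => ε * (⌊t/ε⌋₊ : ℝ)) (𝓝[>] 0) (𝓝 t) := by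
  have h1 : Tendsto (fun ε : ℝ => t/ε) (𝓝[>] 0) atTop := by
    simpa [div_eq_mul_inv] using tendsto_inv_nhdsGT_zero.const_mul_atTop ht
  refine ⟨tendsto_nat_floor_atTop.comp h1, ?_⟩
  have h2 : Tendsto (fun ε : ℝ => (⌊t/ε⌋₊ : ℝ) / (t/ε)) (𝓝[>] 0) (𝓝 1) :=
    (tendsto_nat_floor_div_atTop).comp h1
  have h3 := h2.const_mul t
  rw [mul_one] at h3
  refine h3.congr' ?_
  filter_upwards [self_mem_nhdsWithin] with ε hε
  have : ε ≠ 0 := ne_of_gt hε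
  field_simp

lemma char_limit {d : ℕ} (ω : (Fin d → ℤ) → ℝ) (hfin : (Function.support ω).Finite) (hnn : ∀ v, 0 ≤ ω v)
    (hmass : ∑' v : Fin d → ℤ, ω v = 1) (t : ℝ) (ht : 0 < t) (ξ : Fin d → ℝ) :
    Tendsto (fun ε : ℝ => (jP (d/2) ⌊t/ε⌋₊).eval ((1 - jphi ω (ε • ξ))/2)) (𝓝[>] 0)
      (𝓝 (∑' k, jB (d/2) (t^2 * jg ω hfin ξ / 4) k)) := by
  obtain ⟨h1, h2⟩ := floor_lim t ht
  refine jP_limit _ (by positivity) _ _ _ h1 (Eventually.of_forall fun ε => ?_) ?_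
  · rw [one_sub_jphi ω hfin hmass]
    have : ∀ v ∈ hfin.toFinset, 0 ≤ ω v * (1 - cos (∑ i, (ε • ξ) i * (v i : ℝ))) := fun v _ =>
      mul_nonneg (hnn v) (by linarith [Real.cos_le_one (∑ i, (ε • ξ) i * (v i : ℝ))])
    have := Finset.sum_nonneg this
    linarith
  · have h3 := ((h2.pow 2).mul (phi_limit ω hfin hmass ξ)).div_const 2
    have e : t^2 * (jg ω hfin ξ / 2) / 2 = t^2 * jg ω hfin ξ / 4 := by ring
    rw [e] at h3
    refine h3.congr' ?_
    filter_upwards [self_mem_nhdsWithin] with ε hε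
    have : ε ≠ 0 := ne_of_gt hε
    field_simp

def jball (d : ℕ) : Set (Fin d → ℝ) := {z | ∑ i, z i^2 ≤ 1}

lemma gauss_one (k : ℕ) : ∫ x : ℝ, x^(2*k) * exp (-x^2) = Real.Gamma (k + 1/2) := by
  have h1 : ∀ x : ℝ, x^(2*k) * exp (-x^2) = (fun y : ℝ => y^(2*k) * exp (-y^2)) |x| := by
    intro x; simp [pow_mul]
  rw [integral_congr_ae (Filter.Eventually.of_forall h1), integral_comp_abs (f := fun y : ℝ => y^(2*k) * exp (-y^2))]
  have h2 := integral_rpow_mul_exp_neg_rpow (p := 2) (q := 2*k) (by norm_num) (by linarith [Nat.cast_nonneg (α := ℝ) k])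
  have h3 : ∫ x : ℝ in Set.Ioi 0, x^(2*k) * exp (-x^2) = ∫ x : ℝ in Set.Ioi 0, x^(2*k : ℝ) * exp (-x^(2:ℝ)) := by
    refine setIntegral_congr_fun measurableSet_Ioi fun x _ => ?_
    have e : (2*k : ℝ) = ((2*k : ℕ) : ℝ) := by push_cast; rfl
    simp only [e, Real.rpow_natCast, Real.rpow_two]
  rw [h3, h2]
  have e : ((2*k : ℝ) + 1)/2 = k + 1/2 := by ring
  rw [e]; ring

lemma gauss_one_int (k : ℕ) : Integrable (fun x : ℝ => x^(2*k) * exp (-x^2)) := by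
  have := integrable_rpow_mul_exp_neg_mul_sq (b := 1) one_pos (s := ((2*k : ℕ) : ℝ)) (by linarith [Nat.cast_nonneg (α := ℝ) (2*k)])
  simpa only [Real.rpow_natCast, neg_mul, one_mul] using this

def jgf {d : ℕ} (i0 : Fin d) (k : ℕ) (i : Fin d) (x : ℝ) : ℝ := x^(2*(if i = i0 then k else 0)) * exp (-x^2)

lemma jgf_prod {d : ℕ} (i0 : Fin d) (k : ℕ) (z : Fin d → ℝ) :
    ∏ i, jgf i0 k i (z i) = z i0^(2*k) * exp (-∑ i, z i^2) := by
  unfold jgf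
  rw [Finset.prod_mul_distrib, ← Finset.sum_neg_distrib, Real.exp_sum]
  congr 1
  rw [Finset.prod_eq_single i0]
  · simp
  · intro b _ hb; simp [hb]
  · simp

lemma gauss_int {d : ℕ} (i0 : Fin d) (k : ℕ) :
    Integrable (fun z : Fin d → ℝ => z i0^(2*k) * exp (-∑ i, z i^2)) := by
  have := Integrable.fintype_prod (f := jgf i0 k) (μ := fun _ => volume) (fun i => gauss_one_int _)
  simp only [jgf_prod] at this
  exact this

lemma gauss_moment {d : ℕ} (i0 : Fin d) (k : ℕ) :
    ∫ z : Fin d → ℝ, z i0^(2*k) * exp (-∑ i, z i^2) = √π^(d-1) * Real.Gamma (k + 1/2) := by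
  have := integral_fintype_prod_volume_eq_prod (fun i => jgf i0 k i)
  simp only [jgf_prod] at this
  rw [this, ← Finset.mul_prod_erase Finset.univ _ (Finset.mem_univ i0)]
  have h1 : ∀ i ∈ Finset.univ.erase i0, ∫ x, jgf i0 k i x = √π := by
    intro i hi
    have hne : i ≠ i0 := Finset.ne_of_mem_erase hi
    unfold jgf
    rw [gauss_one, if_neg hne]
    rw [Nat.cast_zero, zero_add, Real.Gamma_one_half_eq]
  rw [Finset.prod_congr rfl h1, Finset.prod_const, Finset.card_erase_of_mem (Finset.mem_univ _)]
  unfold jgf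
  rw [gauss_one]
  simp
  ring

open scoped Pointwise in
lemma gauss_layer {d : ℕ} (i0 : Fin d) (k : ℕ) :
    ∫ z : Fin d → ℝ, z i0^(2*k) * exp (-∑ i, z i^2) =
      Real.Gamma (d/2 + k + 1) * ∫ z in jball d, z i0^(2*k) := by
  set q : (Fin d → ℝ) → ℝ := fun z => ∑ i, z i^2 with hq
  have hqc : Continuous q := by simp only [hq]; fun_prop
  set f : (Fin d → ℝ) → ℝ → ℝ := fun z u => z i0^(2*k) * (Set.Ici (q z)).indicator (fun u => exp (-u)) u with hf
  have hIci : ∀ c : ℝ, ∫ u, (Set.Ici c).indicator (fun u => exp (-u)) u = exp (-c) := by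
    intro c
    rw [integral_indicator measurableSet_Ici, integral_Ici_eq_integral_Ioi, integral_exp_neg_Ioi]
  have hIint : ∀ c : ℝ, Integrable ((Set.Ici c).indicator (fun u : ℝ => exp (-u))) := by
    intro c
    rw [integrable_indicator_iff measurableSet_Ici, integrableOn_Ici_iff_integrableOn_Ioi]
    exact integrableOn_exp_neg_Ioi c
  have hnn : ∀ z u, 0 ≤ f z u := fun z u => mul_nonneg (by rw [pow_mul]; positivity) (Set.indicator_nonneg (fun _ _ => (exp_pos _).le) _)
  have hunc : Function.uncurry f = {p : (Fin d → ℝ) × ℝ | q p.1 ≤ p.2}.indicator (fun p => p.1 i0^(2*k) * exp (-p.2)) := by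
    ext ⟨z, u⟩
    simp only [Function.uncurry, hf, Set.indicator, Set.mem_Ici, Set.mem_ofPred_eq]
    split_ifs <;> simp
  have hmeas : AEStronglyMeasurable (Function.uncurry f) ((volume : Measure (Fin d → ℝ)).prod (volume : Measure ℝ)) := by
    rw [hunc]
    refine AEStronglyMeasurable.indicator ?_ ?_
    · exact Continuous.aestronglyMeasurable (by fun_prop)
    · exact (isClosed_le (by fun_prop) (by fun_prop)).measurableSet
  have hint : Integrable (Function.uncurry f) ((volume : Measure (Fin d → ℝ)).prod (volume : Measure ℝ)) := by
    rw [integrable_prod_iff hmeas]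
    refine ⟨Filter.Eventually.of_forall fun z => by
      show Integrable (fun u => z i0^(2*k) * (Set.Ici (q z)).indicator (fun u => exp (-u)) u) volume
      exact (hIint (q z)).const_mul _, ?_⟩
    have : (fun z => ∫ u, ‖Function.uncurry f (z, u)‖) = fun z => z i0^(2*k) * exp (-∑ i, z i^2) := by
      ext z
      have : ∀ u, ‖Function.uncurry f (z, u)‖ = f z u := fun u => Real.norm_of_nonneg (hnn z u)
      simp only [this]
      simp only [hf]
      rw [integral_const_mul, hIci]
    rw [this]
    exact gauss_int i0 k
  have hswap := integral_integral_swap hint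
  have hl : ∀ z, ∫ u, f z u = z i0^(2*k) * exp (-∑ i, z i^2) := by
    intro z; simp only [hf]; rw [integral_const_mul, hIci]
  simp only [hl] at hswap
  rw [hswap]
  have hneg : ∀ u, u ∉ Set.Ici (0:ℝ) → ∫ z, f z u = 0 := by
    intro u hu
    have : ∀ z, f z u = 0 := by
      intro z
      have hq0 : 0 ≤ q z := Finset.sum_nonneg fun i _ => sq_nonneg _
      have : u ∉ Set.Ici (q z) := by
        simp at hu ⊢; linarith
      simp [hf, this]
    simp [this]
  rw [← setIntegral_eq_integral_of_forall_compl_eq_zero hneg, integral_Ici_eq_integral_Ioi,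
    Real.Gamma_eq_integral (by positivity), ← integral_mul_const]
  refine setIntegral_congr_fun measurableSet_Ioi fun u hu => ?_
  have hu0 : 0 < u := hu
  have hsu : 0 < √u := Real.sqrt_pos.2 hu0
  have hset : √u • jball d = {z | q z ≤ u} := by
    ext z
    rw [Set.mem_smul_set_iff_inv_smul_mem₀ hsu.ne']
    simp only [jball, Set.mem_ofPred_eq, hq, Pi.smul_apply, smul_eq_mul, mul_pow, inv_pow, Real.sq_sqrt hu0.le, ← Finset.mul_sum]
    rw [inv_mul_le_iff₀ hu0, mul_one]
  have hsc := Measure.setIntegral_comp_smul_of_pos volume (fun z : Fin d → ℝ => z i0^(2*k)) (jball d) hsu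
  rw [hset] at hsc
  simp only [Pi.smul_apply, smul_eq_mul, mul_pow] at hsc
  rw [integral_const_mul, Module.finrank_fin_fun] at hsc
  have hfz : ∀ z, f z u = exp (-u) * {z | q z ≤ u}.indicator (fun z => z i0^(2*k)) z := by
    intro z
    simp only [hf, Set.indicator, Set.mem_Ici, Set.mem_ofPred_eq]
    split_ifs
    · ring
    · simp
  simp only [hfz]
  rw [integral_const_mul, integral_indicator (isClosed_le hqc continuous_const).measurableSet]
  have hpw : u^((d:ℝ)/2 + k + 1 - 1) = √u^d * √u^(2*k) := by
    rw [← pow_add, Real.sqrt_eq_rpow, ← Real.rpow_natCast, ← Real.rpow_mul hu0.le]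
    congr 1; push_cast; ring
  rw [hpw, mul_assoc, mul_assoc, hsc]
  field_simp

lemma ball_moment {d : ℕ} (i0 : Fin d) (k : ℕ) :
    ∫ z in jball d, z i0^(2*k) = √π^(d-1) * Real.Gamma (k + 1/2) / Real.Gamma (d/2 + k + 1) := by
  have h1 := gauss_layer i0 k
  rw [gauss_moment] at h1
  have : Real.Gamma (d/2 + k + 1) ≠ 0 := (Real.Gamma_pos_of_pos (by positivity)).ne'
  rw [h1]; field_simp

lemma ball_rot {d : ℕ} (i0 : Fin d) (η : Fin d → ℝ) (g : ℝ → ℝ) :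
    ∫ z in jball d, g (∑ i, η i * z i) = ∫ z in jball d, g (√(∑ i, η i^2) * z i0) := by
  set v : EuclideanSpace ℝ (Fin d) := WithLp.toLp 2 η with hv
  set e : EuclideanSpace ℝ (Fin d) := EuclideanSpace.single i0 (1:ℝ) with he
  have hvn : ‖v‖ = √(∑ i, η i^2) := by
    rw [EuclideanSpace.norm_eq]; simp [hv]
  set w : EuclideanSpace ℝ (Fin d) := ‖v‖ • e with hw
  have hwn : ‖v‖ = ‖w‖ := by simp [hw, he, norm_smul]
  set L := (Submodule.span ℝ {v - w})ᗮ.reflection with hL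
  have hLv : L v = w := Submodule.reflection_sub hwn
  set me := MeasurableEquiv.toLp 2 (Fin d → ℝ) with hme
  set T : (Fin d → ℝ) ≃ᵐ (Fin d → ℝ) := (me.trans L.toMeasurableEquiv).trans me.symm with hT
  have hTapp : ∀ z, T z = WithLp.ofLp (L (WithLp.toLp 2 z)) := fun z => rfl
  have hTm : MeasurePreserving T volume volume := by
    have := ((PiLp.volume_preserving_ofLp (Fin d)).comp (L.measurePreserving)).comp (PiLp.volume_preserving_toLp (Fin d))
    exact this
  have hpre : T ⁻¹' jball d = jball d := by
    ext z
    simp only [Set.mem_preimage, jball, Set.mem_ofPred_eq]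
    have : ∑ i, (T z) i^2 = ∑ i, z i^2 := by
      have h1 : ‖L (WithLp.toLp 2 z)‖^2 = ‖(WithLp.toLp 2 z : EuclideanSpace ℝ (Fin d))‖^2 := by rw [L.norm_map]
      rw [EuclideanSpace.norm_sq_eq, EuclideanSpace.norm_sq_eq] at h1
      simpa [hTapp] using h1
    rw [this]
  have hin : ∀ z, √(∑ i, η i^2) * (T z) i0 = ∑ i, η i * z i := by
    intro z
    have h1 : inner ℝ (L v) (L (WithLp.toLp 2 z)) = inner ℝ v (WithLp.toLp 2 z) := L.inner_map_map _ _
    rw [hLv, hw, he, real_inner_smul_left, EuclideanSpace.inner_single_left, hvn] at h1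
    simp only [map_one, one_mul] at h1
    rw [hTapp, h1]
    simp only [PiLp.inner_apply, hv]
    refine Finset.sum_congr rfl fun i _ => ?_
    simp [mul_comm]
  have := hTm.setIntegral_preimage_emb T.measurableEmbedding (fun z => g (√(∑ i, η i^2) * z i0)) (jball d)
  rw [hpre] at this
  rw [← this]
  simp only [hin]

lemma jball_closed (d : ℕ) : IsClosed (jball d) := isClosed_le (by fun_prop) continuous_const

lemma jball_abs {d : ℕ} {z : Fin d → ℝ} (hz : z ∈ jball d) (i : Fin d) : |z i| ≤ 1 := by
  have h1 : z i^2 ≤ ∑ j, z j^2 := Finset.single_le_sum (f := fun j => z j^2) (fun j _ => sq_nonneg _) (Finset.mem_univ i)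
  have h2 : ∑ j, z j^2 ≤ 1 := hz
  rw [← sq_le_one_iff_abs_le_one]; linarith

lemma jball_compact (d : ℕ) : IsCompact (jball d) := by
  refine (isCompact_closedBall (0 : Fin d → ℝ) 1).of_isClosed_subset (jball_closed d) fun z hz => ?_
  rw [mem_closedBall_zero_iff, pi_norm_le_iff_of_nonneg zero_le_one]
  exact fun i => jball_abs hz i

lemma jcoef {d : ℕ} (hd : 1 ≤ d) (N : ℝ) (k : ℕ) :
    Real.Gamma (d/2+1) / π^((d:ℝ)/2) * ((-1)^k * N^k / ((2*k).factorial : ℝ) *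
      (√π^(d-1) * Real.Gamma (k + 1/2) / Real.Gamma (d/2 + k + 1))) = jB (d/2) (N/4) k := by
  have hG : ∀ k : ℕ, Real.Gamma ((d:ℝ)/2 + k + 1) ≠ 0 := fun k => (Real.Gamma_pos_of_pos (by positivity)).ne'
  have hpi : π^((d:ℝ)/2) = √π^(d-1) * √π := by
    rw [← pow_succ, Nat.sub_add_cancel hd, Real.sqrt_eq_rpow, ← Real.rpow_natCast, ← Real.rpow_mul Real.pi_pos.le]
    congr 1; ring
  have hsp : √π ≠ 0 := (Real.sqrt_pos.2 Real.pi_pos).ne'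
  induction k with
  | zero =>
    have := hG 0
    simp only [Nat.cast_zero, add_zero] at this
    rw [hpi]
    simp only [jB, Finset.range_zero, Finset.prod_empty, Nat.cast_zero, zero_add, Real.Gamma_one_half_eq, add_zero]
    simp
    field_simp
  | succ k ih =>
    have e1 : Real.Gamma (((k+1 : ℕ):ℝ) + 1/2) = (k + 1/2) * Real.Gamma (k + 1/2) := by
      rw [← Real.Gamma_add_one (by positivity)]; congr 1; push_cast; ring
    have e2 : Real.Gamma ((d:ℝ)/2 + ((k+1 : ℕ):ℝ) + 1) = (d/2 + k + 1) * Real.Gamma (d/2 + k + 1) := by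
      rw [← Real.Gamma_add_one (by positivity)]; congr 1; push_cast; ring
    have e3 : ((2*(k+1)).factorial : ℝ) = (2*k+1) * (2*k+2) * ((2*k).factorial : ℝ) := by
      rw [show 2*(k+1) = 2*k+1+1 by ring, Nat.factorial_succ, Nat.factorial_succ]; push_cast; ring
    have e4 : jB (d/2) (N/4) (k+1) = jB (d/2) (N/4) k * (-(N/4) / (((k:ℝ)+1) * (d/2+1+k))) := by
      unfold jB; rw [Finset.prod_range_succ]
    rw [e1, e2, e3, e4, ← ih]
    have := hG k
    have h5 : ((2*k).factorial : ℝ) ≠ 0 := by positivity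
    have h6 : (d:ℝ)/2 + k + 1 ≠ 0 := by positivity
    have h7 : (d:ℝ)/2 + 1 + k ≠ 0 := by positivity
    have h8 : π^((d:ℝ)/2) ≠ 0 := by positivity
    generalize Real.Gamma ((d:ℝ)/2 + k + 1) = G1 at *
    generalize Real.Gamma ((d:ℝ)/2 + 1) = G2 at *
    generalize Real.Gamma ((k:ℝ) + 1/2) = G3 at *
    generalize π^((d:ℝ)/2) = P at *
    field_simp
    ring

lemma ball_cos_series {d : ℕ} (i0 : Fin d) (c : ℝ) (hc : 0 ≤ c) :
    HasSum (fun n : ℕ => ∫ z in jball d, (-1)^n * (c * z i0)^(2*n) / ((2*n).factorial : ℝ))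
      (∫ z in jball d, cos (c * z i0)) := by
  have hfinm : IsFiniteMeasure ((volume : Measure (Fin d → ℝ)).restrict (jball d)) :=
    ⟨by rw [Measure.restrict_apply_univ]; exact (jball_compact d).measure_lt_top⟩
  have hsum : Summable (fun n : ℕ => c^(2*n) / ((2*n).factorial : ℝ)) :=
    (Real.summable_pow_div_factorial c).comp_injective (i := fun n : ℕ => 2*n) (fun a b h => by simpa using h)
  refine hasSum_integral_of_dominated_convergence (fun n _ => c^(2*n) / ((2*n).factorial : ℝ))
    ?_ ?_ ?_ ?_ ?_
  · exact fun n => Continuous.aestronglyMeasurable (by fun_prop)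
  · intro n
    refine ae_restrict_of_forall_mem (jball_closed d).measurableSet fun z hz => ?_
    rw [norm_div, norm_mul, norm_pow, norm_pow, norm_mul]
    simp only [norm_neg, norm_one, one_pow, one_mul, Real.norm_eq_abs, Nat.abs_cast, abs_of_nonneg hc]
    have := jball_abs hz i0
    have h2 : c * |z i0| ≤ c := mul_le_of_le_one_right hc this
    gcongr
  · exact Filter.Eventually.of_forall fun z => hsum
  · exact integrable_const _
  · exact Filter.Eventually.of_forall fun z => Real.hasSum_cos _

lemma jball_cos {d : ℕ} (hd : 1 ≤ d) (η : Fin d → ℝ) :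
    Real.Gamma (d/2+1) / π^((d:ℝ)/2) * ∫ z in jball d, cos (∑ i, η i * z i) =
      ∑' k, jB (d/2) ((∑ i, η i^2)/4) k := by
  obtain ⟨i0⟩ : Nonempty (Fin d) := ⟨⟨0, hd⟩⟩
  rw [ball_rot i0 η cos]
  have hN0 : 0 ≤ ∑ i, η i^2 := Finset.sum_nonneg fun i _ => sq_nonneg _
  generalize ∑ i, η i^2 = N at *
  have hs2 := ((ball_cos_series i0 (√N) (Real.sqrt_nonneg N)).mul_left (Real.Gamma (d/2+1) / π^((d:ℝ)/2))).tsum_eq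
  rw [← hs2]
  refine tsum_congr fun k => ?_
  have hterm : ∀ z : Fin d → ℝ, (-1)^k * (√N * z i0)^(2*k) / ((2*k).factorial : ℝ) =
      ((-1)^k * N^k / ((2*k).factorial : ℝ)) * z i0^(2*k) := by
    intro z
    rw [mul_pow, pow_mul (√N), Real.sq_sqrt hN0]; ring
  simp only [hterm]
  rw [integral_const_mul, ball_moment]
  exact jcoef hd N k

lemma jball_sin {d : ℕ} (η : Fin d → ℝ) : ∫ z in jball d, sin (∑ i, η i * z i) = 0 := by
  have hpre : Neg.neg ⁻¹' jball d = jball d := by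
    ext z; simp [jball]
  have := (Measure.measurePreserving_neg (volume : Measure (Fin d → ℝ))).setIntegral_preimage_emb
    (MeasurableEquiv.neg (Fin d → ℝ)).measurableEmbedding (fun z => sin (∑ i, η i * z i)) (jball d)
  rw [hpre] at this
  simp only [Pi.neg_apply, mul_neg, Finset.sum_neg_distrib, Real.sin_neg, integral_neg] at this
  linarith

def jell {d : ℕ} (Q : Matrix (Fin d) (Fin d) ℝ) (t : ℝ) : Set (Fin d → ℝ) := {y | y ⬝ᵥ (Q⁻¹ *ᵥ y) ≤ t^2}

open scoped MatrixOrder in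
lemma posdef_fac {d : ℕ} (Q : Matrix (Fin d) (Fin d) ℝ) (hQ : Q.PosDef) :
    ∃ B : Matrix (Fin d) (Fin d) ℝ, Q = Bᵀ * B ∧ IsUnit B.det := by
  obtain ⟨B, hB⟩ := CStarAlgebra.nonneg_iff_eq_star_mul_self.mp hQ.posSemidef.nonneg
  have hB' : Q = Bᵀ * B := by
    rw [hB, Matrix.star_eq_conjTranspose, Matrix.conjTranspose_eq_transpose_of_trivial]
  refine ⟨B, hB', ?_⟩
  rw [isUnit_iff_ne_zero]
  intro h
  have := hQ.det_pos
  rw [hB', Matrix.det_mul, h] at this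
  simp at this

lemma ell_image {d : ℕ} (Q B : Matrix (Fin d) (Fin d) ℝ) (hB : Q = Bᵀ * B) (hu : IsUnit B.det) (t : ℝ) (ht : 0 < t) :
    (fun z => t • (Bᵀ *ᵥ z)) '' jball d = jell Q t := by
  have hut : IsUnit Bᵀ.det := by rwa [Matrix.det_transpose]
  have key : ∀ z, (t • (Bᵀ *ᵥ z)) ⬝ᵥ (Q⁻¹ *ᵥ (t • (Bᵀ *ᵥ z))) = t^2 * ∑ i, z i^2 := by
    intro z
    have h1 : Q⁻¹ *ᵥ (Bᵀ *ᵥ z) = B⁻¹ *ᵥ z := by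
      rw [hB, Matrix.mul_inv_rev, Matrix.mulVec_mulVec, Matrix.mul_assoc, Matrix.nonsing_inv_mul _ hut, Matrix.mul_one]
    rw [Matrix.mulVec_smul, h1, dotProduct_smul, smul_dotProduct, Matrix.mulVec_transpose,
      ← Matrix.dotProduct_mulVec, Matrix.mulVec_mulVec, Matrix.mul_nonsing_inv _ hu, Matrix.one_mulVec]
    simp only [smul_eq_mul, dotProduct, ← sq]
    ring
  have ht2 : 0 < t^2 := by positivity
  ext y
  constructor
  · rintro ⟨z, hz, rfl⟩
    have hz' : ∑ i, z i^2 ≤ 1 := hz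
    show _ ≤ t^2
    simp only [key]
    nlinarith
  · intro hy
    have hy' : y ⬝ᵥ (Q⁻¹ *ᵥ y) ≤ t^2 := hy
    have e : t • (Bᵀ *ᵥ (t⁻¹ • (Bᵀ⁻¹ *ᵥ y))) = y := by
      rw [Matrix.mulVec_smul, Matrix.mulVec_mulVec, Matrix.mul_nonsing_inv _ hut, Matrix.one_mulVec, smul_smul, mul_inv_cancel₀ ht.ne', one_smul]
    refine ⟨t⁻¹ • (Bᵀ⁻¹ *ᵥ y), ?_, e⟩
    have := key (t⁻¹ • (Bᵀ⁻¹ *ᵥ y))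
    rw [e] at this
    rw [this] at hy'
    show _ ≤ (1:ℝ)
    exact le_of_mul_le_mul_left (by linarith) ht2

lemma ell_int {d : ℕ} (Q B : Matrix (Fin d) (Fin d) ℝ) (hB : Q = Bᵀ * B) (hu : IsUnit B.det) (t : ℝ) (ht : 0 < t)
    (g : (Fin d → ℝ) → ℝ) :
    ∫ y in jell Q t, g y = t^d * √Q.det * ∫ z in jball d, g (t • (Bᵀ *ᵥ z)) := by
  rw [← ell_image Q B hB hu t ht]
  set A : (Fin d → ℝ) →ₗ[ℝ] (Fin d → ℝ) := Matrix.toLin' (t • Bᵀ) with hA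
  have hAa : ∀ z, A z = t • (Bᵀ *ᵥ z) := fun z => by simp [hA, Matrix.smul_mulVec]
  have hut : IsUnit Bᵀ.det := by rwa [Matrix.det_transpose]
  have h := integral_image_eq_integral_abs_det_fderiv_smul (volume : Measure (Fin d → ℝ)) (s := jball d)
    (f := fun z => t • (Bᵀ *ᵥ z)) (f' := fun _ => LinearMap.toContinuousLinearMap A)
    (jball_closed d).measurableSet
    (fun z _ => by
      have := (LinearMap.toContinuousLinearMap A).hasFDerivAt (x := z)
      have e : (fun z => t • (Bᵀ *ᵥ z)) = ⇑(LinearMap.toContinuousLinearMap A) := by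
        ext1 z; rw [← hAa]; rfl
      rw [e]
      exact this.hasFDerivWithinAt)
    (fun a _ b _ hab => by
      have h1 : Bᵀ *ᵥ a = Bᵀ *ᵥ b := smul_right_injective _ ht.ne' hab
      have h2 := congrArg (fun w => Bᵀ⁻¹ *ᵥ w) h1
      simpa [Matrix.mulVec_mulVec, Matrix.nonsing_inv_mul _ hut] using h2) g
  rw [h]
  have hdet : |(LinearMap.toContinuousLinearMap A).det| = t^d * √Q.det := by
    rw [LinearMap.det_toContinuousLinearMap, hA, LinearMap.det_toLin', Matrix.det_smul, Matrix.det_transpose,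
      hB, Matrix.det_mul, Matrix.det_transpose, Real.sqrt_mul_self_eq_abs, abs_mul, Fintype.card_fin, abs_of_pos (by positivity : 0 < t^d)]
  simp only [hdet, smul_eq_mul]
  rw [integral_const_mul]

lemma ell_dot {d : ℕ} (B : Matrix (Fin d) (Fin d) ℝ) (t : ℝ) (ξ z : Fin d → ℝ) :
    ∑ i, ξ i * (t • (Bᵀ *ᵥ z)) i = ∑ i, (t • (B *ᵥ ξ)) i * z i := by
  show ξ ⬝ᵥ (t • (Bᵀ *ᵥ z)) = (t • (B *ᵥ ξ)) ⬝ᵥ z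
  rw [dotProduct_smul, smul_dotProduct, Matrix.dotProduct_mulVec, Matrix.vecMul_transpose]

lemma ell_cos {d : ℕ} (hd : 1 ≤ d) (Q : Matrix (Fin d) (Fin d) ℝ) (hQ : Q.PosDef) (t : ℝ) (ht : 0 < t) (ξ : Fin d → ℝ) :
    Real.Gamma (d/2+1) / (π^((d:ℝ)/2) * √Q.det * t^d) * ∫ y in jell Q t, cos (∑ i, ξ i * y i) =
      ∑' k, jB (d/2) (t^2 * (ξ ⬝ᵥ (Q *ᵥ ξ)) / 4) k := by
  obtain ⟨B, hB, hu⟩ := posdef_fac Q hQ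
  have hdp : 0 < √Q.det := Real.sqrt_pos.2 hQ.det_pos
  rw [ell_int Q B hB hu t ht (fun y => cos (∑ i, ξ i * y i))]
  simp only [ell_dot]
  have h1 := jball_cos hd (t • (B *ᵥ ξ))
  have h2 : ∑ i, (t • (B *ᵥ ξ)) i^2 = t^2 * (ξ ⬝ᵥ (Q *ᵥ ξ)) := by
    rw [hB, ← Matrix.mulVec_mulVec, Matrix.dotProduct_mulVec, Matrix.vecMul_transpose, dotProduct, Finset.mul_sum]
    refine Finset.sum_congr rfl fun i _ => ?_
    simp; ring
  rw [h2] at h1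
  rw [← h1]
  have : π^((d:ℝ)/2) ≠ 0 := by positivity
  field_simp

lemma ell_sin {d : ℕ} (Q : Matrix (Fin d) (Fin d) ℝ) (hQ : Q.PosDef) (t : ℝ) (ht : 0 < t) (ξ : Fin d → ℝ) :
    ∫ y in jell Q t, sin (∑ i, ξ i * y i) = 0 := by
  obtain ⟨B, hB, hu⟩ := posdef_fac Q hQ
  rw [ell_int Q B hB hu t ht (fun y => sin (∑ i, ξ i * y i))]
  simp only [ell_dot, jball_sin, mul_zero]

lemma jell_compact {d : ℕ} (Q : Matrix (Fin d) (Fin d) ℝ) (hQ : Q.PosDef) (t : ℝ) (ht : 0 < t) :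
    IsCompact (jell Q t) := by
  obtain ⟨B, hB, hu⟩ := posdef_fac Q hQ
  rw [← ell_image Q B hB hu t ht]
  exact (jball_compact d).image (by fun_prop)

def chF {d : ℕ} (ξ : Fin d → ℝ) (y : Fin d → ℝ) : ℂ := Complex.exp (Complex.I * ((∑ i, ξ i * y i : ℝ) : ℂ))

lemma chF_cont {d : ℕ} (ξ : Fin d → ℝ) : Continuous (chF ξ) := by unfold chF; fun_prop

lemma chF_mul {d : ℕ} (ξ η y : Fin d → ℝ) : chF ξ y * chF η y = chF (ξ + η) y := by
  unfold chF
  rw [← Complex.exp_add, ← mul_add, ← Complex.ofReal_add, ← Finset.sum_add_distrib]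
  congr 3
  refine Finset.sum_congr rfl fun i _ => ?_
  simp; ring

lemma chF_star {d : ℕ} (ξ y : Fin d → ℝ) : star (chF ξ y) = chF (-ξ) y := by
  unfold chF
  rw [Complex.star_def, ← Complex.exp_conj, map_mul, Complex.conj_I, Complex.conj_ofReal]
  simp

def chK {d : ℕ} (K : Set (Fin d → ℝ)) (ξ : Fin d → ℝ) : C(K, ℂ) := ⟨fun y => chF ξ y, (chF_cont ξ).comp continuous_subtype_val⟩

def chStar {d : ℕ} (K : Set (Fin d → ℝ)) : StarSubalgebra ℂ C(K, ℂ) where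
  carrier := Submodule.span ℂ (Set.range (chK K))
  mul_mem' := by
    intro a b ha hb
    have h := Submodule.mul_mem_mul ha hb
    rw [Submodule.span_mul_span] at h
    refine Submodule.span_mono ?_ h
    rintro _ ⟨_, ⟨ξ, rfl⟩, _, ⟨η, rfl⟩, rfl⟩
    exact ⟨ξ + η, by ext y; exact (chF_mul ξ η y).symm⟩
  add_mem' := fun ha hb => Submodule.add_mem _ ha hb
  algebraMap_mem' := by
    intro r
    have h1 : chK K 0 ∈ Submodule.span ℂ (Set.range (chK K)) := Submodule.subset_span ⟨0, rfl⟩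
    have := Submodule.smul_mem _ r h1
    have e : r • chK K 0 = algebraMap ℂ C(K, ℂ) r := by
      ext y; simp [chK, chF]
    rw [e] at this
    exact this
  star_mem' := by
    intro a ha
    induction ha using Submodule.span_induction with
    | mem x hx =>
      obtain ⟨ξ, rfl⟩ := hx
      exact Submodule.subset_span ⟨-ξ, by ext y; exact (chF_star ξ y).symm⟩
    | zero => rw [star_zero]; exact Submodule.zero_mem _
    | add x y _ _ hx hy => rw [star_add]; exact Submodule.add_mem _ hx hy
    | smul c x _ hx => rw [star_smul]; exact Submodule.smul_mem _ _ hx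

lemma chStar_sep {d : ℕ} (K : Set (Fin d → ℝ)) : (chStar K).SeparatesPoints := by
  intro y y' hne
  have hne' : (y : Fin d → ℝ) - y' ≠ 0 := fun h => hne (Subtype.ext (sub_eq_zero.1 h))
  set w : Fin d → ℝ := (y : Fin d → ℝ) - y' with hw
  have hpos : 0 < ∑ i, w i * w i := by
    obtain ⟨i, hi⟩ : ∃ i, w i ≠ 0 := by
      by_contra! h; exact hne' (funext h)
    refine Finset.sum_pos' (fun j _ => mul_self_nonneg _) ⟨i, Finset.mem_univ i, mul_self_pos.2 hi⟩
  set N := ∑ i, w i * w i with hN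
  set ξ : Fin d → ℝ := (π / N) • w with hξ
  refine ⟨chK K ξ, ⟨chK K ξ, Submodule.subset_span ⟨ξ, rfl⟩, rfl⟩, ?_⟩
  intro h
  have h' : chF ξ y = chF ξ y' := h
  have hw2 : chF ξ w = -1 := by
    unfold chF
    have : ∑ i, ξ i * w i = π := by
      simp only [hξ, Pi.smul_apply, smul_eq_mul, mul_assoc, ← Finset.mul_sum]
      rw [← hN]; field_simp
    rw [this, mul_comm, Complex.exp_pi_mul_I]
  have hadd : chF ξ y = chF ξ w * chF ξ y' := by
    unfold chF
    rw [← Complex.exp_add, ← mul_add, ← Complex.ofReal_add, ← Finset.sum_add_distrib]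
    congr 3
    refine Finset.sum_congr rfl fun i _ => ?_
    simp [hw]; ring
  rw [hw2, h'] at hadd
  have h0 : chF ξ y' = 0 := by linear_combination hadd/2
  exact Complex.exp_ne_zero _ h0

lemma char_dense {d : ℕ} (K : Set (Fin d → ℝ)) (hK : IsCompact K) (f : (Fin d → ℝ) → ℝ) (hf : Continuous f)
    (δ : ℝ) (hδ : 0 < δ) :
    ∃ G ∈ Submodule.span ℂ (Set.range (chF (d := d))), ∀ y ∈ K, ‖(f y : ℂ) - G y‖ ≤ δ := by
  have : CompactSpace K := isCompact_iff_compactSpace.1 hK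
  have htop := ContinuousMap.starSubalgebra_topologicalClosure_eq_top_of_separatesPoints (chStar K) (chStar_sep K)
  set F : C(K, ℂ) := ⟨fun y => (f y : ℂ), by fun_prop⟩ with hF
  have hmem : F ∈ (chStar K).topologicalClosure := by rw [htop]; trivial
  have hcl : F ∈ closure ((chStar K : Set C(K, ℂ))) := hmem
  obtain ⟨g, hg, hdist⟩ := Metric.mem_closure_iff.1 hcl δ hδ
  have hg' : g ∈ Submodule.span ℂ (Set.range (chK K)) := hg
  have hext : ∃ G ∈ Submodule.span ℂ (Set.range (chF (d := d))), ∀ y : K, g y = G y := by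
    clear hdist hg
    induction hg' using Submodule.span_induction with
    | mem x hx =>
      obtain ⟨ξ, rfl⟩ := hx
      exact ⟨chF ξ, Submodule.subset_span ⟨ξ, rfl⟩, fun y => rfl⟩
    | zero => exact ⟨0, Submodule.zero_mem _, fun y => rfl⟩
    | add x y _ _ hx hy =>
      obtain ⟨G1, h1, e1⟩ := hx
      obtain ⟨G2, h2, e2⟩ := hy
      exact ⟨G1 + G2, Submodule.add_mem _ h1 h2, fun y => by simp [e1, e2]⟩
    | smul c x _ hx =>
      obtain ⟨G1, h1, e1⟩ := hx
      exact ⟨c • G1, Submodule.smul_mem _ _ h1, fun y => by simp [e1]⟩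
  obtain ⟨G, hG, e⟩ := hext
  refine ⟨G, hG, fun y hy => ?_⟩
  have h1 := ContinuousMap.dist_apply_le_dist (f := F) (g := g) ⟨y, hy⟩
  rw [dist_eq_norm, e] at h1
  exact h1.trans hdist.le

lemma chF_int {d : ℕ} (hd : 1 ≤ d) (Q : Matrix (Fin d) (Fin d) ℝ) (hQ : Q.PosDef) (t : ℝ) (ht : 0 < t) (ξ : Fin d → ℝ) :
    ((Real.Gamma (d/2+1) / (π^((d:ℝ)/2) * √Q.det * t^d) : ℝ) : ℂ) * ∫ y in jell Q t, chF ξ y =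
      ((∑' k, jB (d/2) (t^2 * (ξ ⬝ᵥ (Q *ᵥ ξ)) / 4) k : ℝ) : ℂ) := by
  have hK := jell_compact Q hQ t ht
  have h1 : ∀ y, chF ξ y = (cos (∑ i, ξ i * y i) : ℂ) + (sin (∑ i, ξ i * y i) : ℂ) * Complex.I := by
    intro y
    unfold chF
    rw [mul_comm, Complex.exp_mul_I, Complex.ofReal_cos, Complex.ofReal_sin]
  have h2 : ∫ y in jell Q t, chF ξ y = ((∫ y in jell Q t, cos (∑ i, ξ i * y i) : ℝ) : ℂ) +
      ((∫ y in jell Q t, sin (∑ i, ξ i * y i) : ℝ) : ℂ) * Complex.I := by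
    simp only [h1]
    rw [integral_add, integral_mul_const]
    · congr 1
      · rw [← integral_complex_ofReal]
      · rw [← integral_complex_ofReal]
    · exact ContinuousOn.integrableOn_compact hK (by fun_prop)
    · exact ContinuousOn.integrableOn_compact hK (by fun_prop)
  rw [h2, ell_sin Q hQ t ht, ← ell_cos hd Q hQ t ht]
  push_cast
  ring

def jS {d : ℕ} (x : ℕ → (Fin d → ℤ) → ℝ) (R : ℕ) (t : ℝ) (G : (Fin d → ℝ) → ℂ) (ε : ℝ) : ℂ :=
  ∑ v ∈ jbox d (⌊t/ε⌋₊ * R), (x ⌊t/ε⌋₊ v : ℂ) * G (fun i => ε * (v i : ℝ))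

lemma span_conv {d : ℕ} (hd : 1 ≤ d) (ω : (Fin d → ℤ) → ℝ) (hfin : (Function.support ω).Finite)
    (hnn : ∀ v, 0 ≤ ω v)
    (hmass : ∑' v : Fin d → ℤ, ω v = 1) (hsymm : ∀ v, ω (-v) = ω v)
    (R : ℕ) (hR : ∀ v, ω v ≠ 0 → ∀ i, |v i| ≤ R)
    (hQ : (covQ d ω).PosDef) (x : ℕ → (Fin d → ℤ) → ℝ) (hx : IsIter d ω x) (t : ℝ) (ht : 0 < t)
    (G : (Fin d → ℝ) → ℂ) (hG : G ∈ Submodule.span ℂ (Set.range (chF (d := d)))) :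
    Continuous G ∧ Tendsto (jS x R t G) (𝓝[>] 0)
      (𝓝 (((Real.Gamma (d/2+1) / (π^((d:ℝ)/2) * √(covQ d ω).det * t^d) : ℝ) : ℂ) * ∫ y in jell (covQ d ω) t, G y)) := by
  have hK := jell_compact (covQ d ω) hQ t ht
  induction hG using Submodule.span_induction with
  | mem G hG =>
    obtain ⟨ξ, rfl⟩ := hG
    refine ⟨chF_cont ξ, ?_⟩
    rw [chF_int hd _ hQ t ht, ← jg_eq ω hfin]
    have h := char_limit ω hfin hnn hmass t ht ξ
    have h2 := (Complex.continuous_ofReal.tendsto _).comp h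
    refine h2.congr fun ε => ?_
    show (((jP (d/2) ⌊t/ε⌋₊).eval ((1 - jphi ω (ε • ξ))/2) : ℝ) : ℂ) = _
    rw [← iter_ft hd ω hfin hsymm R hR x hx (ε • ξ) ⌊t/ε⌋₊, jS, tsum_eq_sum (s := jbox d (⌊t/ε⌋₊ * R))]
    · refine Finset.sum_congr rfl fun v _ => ?_
      unfold jchi chF
      congr 4
      refine Finset.sum_congr rfl fun i _ => ?_
      simp; ring
    · intro v hv
      rw [iter_box ω hfin R hR x hx _ v hv]; simp
  | zero =>
    refine ⟨continuous_const, ?_⟩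
    have : jS x R t (0 : (Fin d → ℝ) → ℂ) = fun _ => 0 := by ext ε; simp [jS]
    rw [this]; simp
  | add G1 G2 _ _ h1 h2 =>
    refine ⟨h1.1.add h2.1, ?_⟩
    have e : jS x R t (G1 + G2) = fun ε => jS x R t G1 ε + jS x R t G2 ε := by
      ext ε; simp [jS, mul_add, Finset.sum_add_distrib]
    have e2 : ∫ y in jell (covQ d ω) t, (G1 + G2) y = (∫ y in jell (covQ d ω) t, G1 y) + ∫ y in jell (covQ d ω) t, G2 y :=
      integral_add (h1.1.continuousOn.integrableOn_compact hK) (h2.1.continuousOn.integrableOn_compact hK)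
    rw [e, e2, mul_add]
    exact h1.2.add h2.2
  | smul c G1 _ h1 =>
    refine ⟨h1.1.const_smul c, ?_⟩
    have e : jS x R t (c • G1) = fun ε => c * jS x R t G1 ε := by
      ext ε; simp only [jS, Finset.mul_sum]
      refine Finset.sum_congr rfl fun v _ => ?_
      simp; ring
    have e2 : ∫ y in jell (covQ d ω) t, (c • G1) y = c * (∫ y in jell (covQ d ω) t, G1 y) :=
      integral_const_mul _ _
    rw [e, e2, mul_left_comm]
    exact h1.2.const_mul c

/-- Weak convergence of the Jacobi polynomial iteration to the fundamental solution of the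
Euler–Poisson–Darboux equation. -/
theorem jacobi_iteration_weak_convergence
    (d : ℕ) (hd : 1 ≤ d) (ω : (Fin d → ℤ) → ℝ)
    (hfin : (Function.support ω).Finite) (hnn : ∀ v, 0 ≤ ω v)
    (hmass : ∑' v : Fin d → ℤ, ω v = 1) (hsymm : ∀ v, ω (-v) = ω v)
    (hQ : (covQ d ω).PosDef)
    (haper : ∀ ξ : Fin d → ℝ, (∀ i, ξ i ∈ Set.Icc (-π) π) → ξ ≠ 0 →
      ‖ftOmega ω ξ‖ < 1)
    (x : ℕ → (Fin d → ℤ) → ℝ)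
    (hx0 : ∀ v, x 0 v = if v = 0 then 1 else 0)
    (hx1 : ∀ v, x 1 v = aCoef0 d * latticeConv ω (x 0) v + bCoef0 d * x 0 v)
    (hrec : ∀ n, 1 ≤ n → ∀ v,
      x (n + 1) v = aCoef d n * latticeConv ω (x n) v + bCoef d n * x n v - cCoef d n * x (n - 1) v)
    (t : ℝ) (ht : 0 < t)
    (f : (Fin d → ℝ) → ℝ) (hf : Continuous f) (hfb : ∃ M, ∀ y, |f y| ≤ M) :
    Tendsto (fun ε : ℝ => ∑' v : Fin d → ℤ, x ⌊t / ε⌋₊ v * f (fun i => ε * (v i : ℝ)))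
      (𝓝[>] 0)
      (𝓝 ((Real.Gamma ((d : ℝ) / 2 + 1) /
            (π ^ ((d : ℝ) / 2) * Real.sqrt (covQ d ω).det * t ^ d)) *
          ∫ y in {y : Fin d → ℝ | y ⬝ᵥ ((covQ d ω)⁻¹ *ᵥ y) ≤ t ^ 2}, f y)) := by
  have hx : IsIter d ω x := ⟨hx0, hx1, hrec⟩
  obtain ⟨R, hR⟩ : ∃ R : ℕ, ∀ v, ω v ≠ 0 → ∀ i, |v i| ≤ R := by
    refine ⟨∑ v ∈ hfin.toFinset, ∑ i, (v i).natAbs, fun v hv i => ?_⟩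
    have h1 : (v i).natAbs ≤ ∑ i, (v i).natAbs :=
      Finset.single_le_sum (f := fun i => (v i).natAbs) (fun _ _ => Nat.zero_le _) (Finset.mem_univ i)
    have h2 : ∑ i, (v i).natAbs ≤ ∑ v ∈ hfin.toFinset, ∑ i, (v i).natAbs :=
      Finset.single_le_sum (f := fun v : Fin d → ℤ => ∑ i, (v i).natAbs) (fun _ _ => Nat.zero_le _) (by simpa using hv)
    have h3 := h1.trans h2
    rw [Int.abs_eq_natAbs]
    exact_mod_cast h3
  obtain ⟨M, hM, n1, htv⟩ := tv_bound hd ω hfin hnn hmass hsymm R hR hQ haper x hx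
  have hE := jell_compact (covQ d ω) hQ t ht
  change Tendsto _ _ (𝓝 (_ * ∫ y in jell (covQ d ω) t, f y))
  set c := Real.Gamma ((d : ℝ) / 2 + 1) / (π ^ ((d : ℝ) / 2) * Real.sqrt (covQ d ω).det * t ^ d) with hc
  set K := Metric.closedBall (0 : Fin d → ℝ) (t * R) ∪ jell (covQ d ω) t with hKdef
  have hK : IsCompact K := (isCompact_closedBall _ _).union hE
  set V := (volume (jell (covQ d ω) t)).toReal with hV
  have hV0 : 0 ≤ V := ENNReal.toReal_nonneg
  rw [Metric.tendsto_nhds]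
  intro δ hδ
  set D := M + |c| * V + 1 with hD
  have hD0 : 0 < D := by positivity
  obtain ⟨G, hG, hGf⟩ := char_dense K hK f hf (δ / (2 * D)) (by positivity)
  obtain ⟨hGc, hGt⟩ := span_conv hd ω hfin hnn hmass hsymm R hR hQ x hx t ht G hG
  rw [← hc] at hGt
  have hGt2 := (Metric.tendsto_nhds.1 hGt) (δ/2) (by positivity)
  have hbig := (floor_lim t ht).1.eventually_ge_atTop n1
  filter_upwards [hGt2, hbig, self_mem_nhdsWithin] with ε h1 h2 h3
  have hε : 0 < ε := h3
  have hsum : ∑' v : Fin d → ℤ, x ⌊t / ε⌋₊ v * f (fun i => ε * (v i : ℝ)) =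
      ∑ v ∈ jbox d (⌊t / ε⌋₊ * R), x ⌊t / ε⌋₊ v * f (fun i => ε * (v i : ℝ)) := by
    refine tsum_eq_sum fun v hv => ?_
    rw [iter_box ω hfin R hR x hx _ v hv, zero_mul]
  rw [hsum]
  have hfl : ε * (⌊t / ε⌋₊ : ℝ) ≤ t := by
    have := Nat.floor_le (by positivity : 0 ≤ t / ε)
    calc ε * (⌊t / ε⌋₊ : ℝ) ≤ ε * (t / ε) := by gcongr
      _ = t := by field_simp
  have hmemK : ∀ v ∈ jbox d (⌊t / ε⌋₊ * R), (fun i => ε * (v i : ℝ)) ∈ K := by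
    intro v hv
    left
    rw [mem_closedBall_zero_iff, pi_norm_le_iff_of_nonneg (by positivity)]
    intro i
    have hvi := (mem_jbox _ _ _).1 hv i
    have hvi' : |(v i : ℝ)| ≤ (⌊t / ε⌋₊ : ℝ) * R := by exact_mod_cast hvi
    rw [Real.norm_eq_abs, abs_mul, abs_of_pos hε]
    calc ε * |(v i : ℝ)| ≤ ε * ((⌊t / ε⌋₊ : ℝ) * R) := by gcongr
      _ = (ε * (⌊t / ε⌋₊ : ℝ)) * R := by ring
      _ ≤ t * R := by gcongr
  have hA : ‖((∑ v ∈ jbox d (⌊t / ε⌋₊ * R), x ⌊t / ε⌋₊ v * f (fun i => ε * (v i : ℝ)) : ℝ) : ℂ) - jS x R t G ε‖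
      ≤ M * (δ / (2 * D)) := by
    rw [jS]
    push_cast
    rw [← Finset.sum_sub_distrib]
    calc _ ≤ ∑ v ∈ jbox d (⌊t / ε⌋₊ * R), |x ⌊t / ε⌋₊ v| * (δ / (2 * D)) := by
          refine norm_sum_le_of_le _ fun v hv => ?_
          rw [← mul_sub, norm_mul, Complex.norm_real, Real.norm_eq_abs]
          gcongr
          exact hGf _ (hmemK v hv)
      _ = (∑ v ∈ jbox d (⌊t / ε⌋₊ * R), |x ⌊t / ε⌋₊ v|) * (δ / (2 * D)) := by rw [Finset.sum_mul]
      _ ≤ _ := by gcongr; exact htv _ h2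
  have hB : ‖(c : ℂ) * (∫ y in jell (covQ d ω) t, G y) - ((c * ∫ y in jell (covQ d ω) t, f y : ℝ) : ℂ)‖
      ≤ |c| * V * (δ / (2 * D)) := by
    have hfi : IntegrableOn (fun y => (f y : ℂ)) (jell (covQ d ω) t) :=
      (Complex.continuous_ofReal.comp hf).continuousOn.integrableOn_compact hE
    have e : ((∫ y in jell (covQ d ω) t, f y : ℝ) : ℂ) = ∫ y in jell (covQ d ω) t, (f y : ℂ) :=
      integral_complex_ofReal.symm
    rw [Complex.ofReal_mul, e, ← mul_sub, norm_mul, Complex.norm_real, Real.norm_eq_abs, mul_assoc,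
      ← integral_sub (hGc.continuousOn.integrableOn_compact hE) hfi]
    gcongr
    have := norm_setIntegral_le_of_norm_le_const (μ := volume) (f := fun y => G y - (f y : ℂ)) (C := δ / (2 * D))
      hE.measure_lt_top (fun y hy => by rw [norm_sub_rev]; exact hGf y (Or.inr hy))
    rw [mul_comm]
    exact this
  rw [dist_eq_norm] at h1
  rw [dist_eq_norm, ← Complex.norm_real, Complex.ofReal_sub]
  set a := ((∑ v ∈ jbox d (⌊t / ε⌋₊ * R), x ⌊t / ε⌋₊ v * f (fun i => ε * (v i : ℝ)) : ℝ) : ℂ)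
  set b := ((c * ∫ y in jell (covQ d ω) t, f y : ℝ) : ℂ)
  set g := (c : ℂ) * (∫ y in jell (covQ d ω) t, G y)
  have htri : ‖a - b‖ ≤ ‖a - jS x R t G ε‖ + ‖jS x R t G ε - g‖ + ‖g - b‖ := by
    have : a - b = (a - jS x R t G ε) + (jS x R t G ε - g) + (g - b) := by ring
    rw [this]; exact norm_add₃_le
  have hlast : M * (δ / (2 * D)) + |c| * V * (δ / (2 * D)) ≤ δ/2 := by
    have : D * (δ / (2 * D)) = δ/2 := by field_simp
    have h4 : M + |c| * V ≤ D := by rw [hD]; linarith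
    calc _ = (M + |c| * V) * (δ / (2 * D)) := by ring
      _ ≤ D * (δ / (2 * D)) := by gcongr
      _ = _ := this
  linarith
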